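/- arXiv:2101.01680 — 7 statements merged into one kernel-verified Lean document; each statement's English description precedes it below -/
import Mathlib

section
/- For every α ∈ (0,2), the function ρ_α has exactly one zero θ₀(α) in the open interval (t₀(α), min(π, πα)); in particular θ₀(α) = t₀(α) + Δt(α) with Δt(α) > 0. -/
open MeasureTheory Set

/-- `t₀(α) = 2πα/(α+2)`. -/
noncomputable def t0 (α : ℝ) : ℝ := 2 * Real.pi * α / (α + 2)

/-- `Z₀(θ) = (sin t₀(α) / sin θ)^(1/α)`. -/
noncomputable def Z0 (α θ : ℝ) : ℝ := (Real.sin (t0 α) / Real.sin θ) ^ (1 / α)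

/-- The quantity `e^{ia} - (sin a / sin θ) e^{iθ} s^α`, written in terms of `c = -cot θ`. -/
noncomputable def radicand (a α c s : ℝ) : ℂ :=
  ⟨Real.cos a + Real.sin a * (s ^ α * c), Real.sin a * (1 - s ^ α)⟩

/-- The integral over `[0, 1]` of the principal square root of `radicand a α c`. -/
noncomputable def sqrtIntegral (a α c : ℝ) : ℂ :=
  ∫ s in (0 : ℝ)..1, radicand a α c s ^ (1 / 2 : ℂ)

lemma rpow_lt_one_of_mem_Ioo {α s : ℝ} (hα : 0 < α) (hs : s ∈ Ioo (0 : ℝ) 1) : s ^ α < 1 :=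
  Real.rpow_lt_one hs.1.le hs.2 hα

lemma min_mul_one_sub_le_one_sub_rpow {α s : ℝ} (hα : 0 < α) (hs : s ∈ Ioo (0 : ℝ) 1) :
    min 1 α * (1 - s) ≤ 1 - s ^ α := by
  have h1 : 0 < 1 - s := sub_pos.2 hs.2
  rcases le_total 1 α with h | h
  · have := Real.rpow_le_rpow_of_exponent_ge hs.1 hs.2.le h
    rw [Real.rpow_one] at this
    rw [min_eq_left h]; linarith
  · have := rpow_one_add_le_one_add_mul_self (s := s - 1) (p := α) (by linarith [hs.1]) hα.le h
    rw [add_sub_cancel] at this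
    rw [min_eq_right h]; linarith

lemma intervalIntegrable_one_sub_rpow_rpow {α : ℝ} (hα : 0 < α) :
    IntervalIntegrable (fun s : ℝ => (1 - s ^ α) ^ (-(1 / 2) : ℝ)) volume 0 1 := by
  have hm : 0 < min 1 α := lt_min one_pos hα
  have h0 : IntervalIntegrable (fun s : ℝ => s ^ (-(1 / 2) : ℝ)) volume 0 1 :=
    intervalIntegral.intervalIntegrable_rpow' (by norm_num)
  have h1 := ((h0.comp_sub_left 1).symm).const_mul ((min 1 α) ^ (-(1 / 2) : ℝ))
  norm_num at h1
  norm_num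
  rw [intervalIntegrable_iff_integrableOn_Ioo_of_le zero_le_one] at h1 ⊢
  refine h1.mono' (by
    exact Measurable.aestronglyMeasurable (by fun_prop)) ?_
  refine (ae_restrict_iff' measurableSet_Ioo).2 (ae_of_all _ fun s hs => ?_)
  have h2 := min_mul_one_sub_le_one_sub_rpow hα hs
  have h3 : 0 < min 1 α * (1 - s) := mul_pos hm (sub_pos.2 hs.2)
  rw [Real.norm_of_nonneg (Real.rpow_nonneg (h3.le.trans h2) _),
    ← Real.mul_rpow hm.le (sub_pos.2 hs.2).le]
  exact Real.rpow_le_rpow_of_nonpos h3 h2 (by norm_num)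

lemma radicand_mem_slitPlane {a α c s : ℝ} (ha : 0 < Real.sin a) (hα : 0 < α)
    (hs : s ∈ Ioo (0 : ℝ) 1) : radicand a α c s ∈ Complex.slitPlane :=
  Or.inr (mul_pos ha (sub_pos.2 (rpow_lt_one_of_mem_Ioo hα hs))).ne'

lemma continuous_radicand {α : ℝ} (hα : 0 < α) (a c : ℝ) : Continuous (radicand a α c) := by
  have h : radicand a α c = fun s : ℝ =>
      ((Real.cos a + Real.sin a * (s ^ α * c) : ℝ) : ℂ) +
        ((Real.sin a * (1 - s ^ α) : ℝ) : ℂ) * Complex.I := by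
    funext s; exact Complex.mk_eq_add_mul_I _ _
  have h1 : Continuous fun s : ℝ => s ^ α := Real.continuous_rpow_const hα.le
  rw [h]; fun_prop

lemma continuousWithinAt_sqrt_of_slitPlane_or_zero {f : ℝ → ℂ} {s : Set ℝ} {x : ℝ}
    (hf : ContinuousWithinAt f s x) (h : f x ∈ Complex.slitPlane ∨ f x = 0) :
    ContinuousWithinAt (fun t => f t ^ (1 / 2 : ℂ)) s x := by
  rcases h with h | h
  · exact ContinuousWithinAt.cpow hf continuousWithinAt_const h
  · have h2 : ContinuousAt (fun z : ℂ => z ^ (1 / 2 : ℂ)) (f x) := by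
      rw [h]
      have h3 := Complex.continuousAt_cpow_zero_of_re_pos (z := 1 / 2) (by norm_num)
      exact ContinuousAt.comp (f := fun z : ℂ => (z, (1 / 2 : ℂ))) h3 (by fun_prop)
    exact ContinuousAt.comp_continuousWithinAt h2 hf

lemma norm_radicand_rpow_le {a α c s : ℝ} (ha : 0 < Real.sin a) (hα : 0 < α)
    (hs : s ∈ Ioo (0 : ℝ) 1) :
    ‖radicand a α c s ^ (-(1 / 2) : ℂ)‖ ≤
      Real.sin a ^ (-(1 / 2) : ℝ) * (1 - s ^ α) ^ (-(1 / 2) : ℝ) := by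
  have h1 : 0 < 1 - s ^ α := sub_pos.2 (rpow_lt_one_of_mem_Ioo hα hs)
  have h2 : Real.sin a * (1 - s ^ α) ≤ ‖radicand a α c s‖ :=
    (le_abs_self _).trans (Complex.abs_im_le_norm (radicand a α c s))
  have h3 : (-(1 / 2) : ℂ) = ((-(1 / 2) : ℝ) : ℂ) := by push_cast; ring
  rw [← Real.mul_rpow ha.le h1.le, h3, Complex.norm_cpow_real]
  exact Real.rpow_le_rpow_of_nonpos (mul_pos ha h1) h2 (by norm_num)

lemma norm_sqrt_radicand_le {a α c s : ℝ} (hα : 0 < α) (hs : s ∈ Icc (0 : ℝ) 1) :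
    ‖radicand a α c s ^ (1 / 2 : ℂ)‖ ≤ √(2 + |c|) := by
  have h3 : (1 / 2 : ℂ) = ((1 / 2 : ℝ) : ℂ) := by push_cast; ring
  rw [h3, Complex.norm_cpow_real, ← Real.sqrt_eq_rpow]
  refine Real.sqrt_le_sqrt ?_
  have h0 : 0 ≤ s ^ α := Real.rpow_nonneg hs.1 _
  have h1 : s ^ α ≤ 1 := Real.rpow_le_one hs.1 hs.2 hα.le
  have h2 := Complex.norm_le_abs_re_add_abs_im (radicand a α c s)
  simp only [radicand] at h2 ⊢
  have h4 : |Real.cos a + Real.sin a * (s ^ α * c)| ≤ 1 + 1 * (1 * |c|) := by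
    refine (abs_add_le _ _).trans (add_le_add (Real.abs_cos_le_one a) ?_)
    rw [abs_mul, abs_mul, abs_of_nonneg h0]
    gcongr
    exact Real.abs_sin_le_one a
  have h5 : |Real.sin a * (1 - s ^ α)| ≤ 1 * 1 := by
    rw [abs_mul, abs_of_nonneg (sub_nonneg.2 h1)]
    gcongr
    · exact Real.abs_sin_le_one a
    · linarith
  linarith

lemma radicand_one (a α c : ℝ) :
    radicand a α c 1 = ((Real.cos a + Real.sin a * c : ℝ) : ℂ) := by
  apply Complex.ext <;> simp [radicand, -Complex.ofReal_add, -Complex.ofReal_mul,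
    -Complex.ofReal_sin, -Complex.ofReal_cos]

lemma intervalIntegrable_sqrt_radicand {α : ℝ} (hα : 0 < α) (a c : ℝ) :
    IntervalIntegrable (fun s => radicand a α c s ^ (1 / 2 : ℂ)) volume 0 1 := by
  rw [intervalIntegrable_iff_integrableOn_Icc_of_le zero_le_one]
  refine Measure.integrableOn_of_bounded (M := √(2 + |c|)) (by simp)
    ((continuous_radicand hα a c).measurable.pow_const _).aestronglyMeasurable ?_
  exact (ae_restrict_iff' measurableSet_Icc).2 (ae_of_all _ fun s hs => norm_sqrt_radicand_le hα hs)

lemma ae_mem_uIoc_imp {P : ℝ → Prop} (h : ∀ s ∈ Ioo (0 : ℝ) 1, P s) :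
    ∀ᵐ s : ℝ, s ∈ Set.uIoc (0 : ℝ) 1 → P s := by
  filter_upwards [compl_mem_ae_iff.2 (measure_singleton (1 : ℝ))] with s hs h1
  rw [uIoc_of_le zero_le_one] at h1
  exact h s ⟨h1.1, lt_of_le_of_ne h1.2 hs⟩

lemma hasDerivAt_sqrtIntegral_integral {a α : ℝ} (ha : 0 < Real.sin a) (hα : 0 < α) (c : ℝ) :
    IntervalIntegrable (fun s => ((Real.sin a * s ^ α / 2 : ℝ) : ℂ) *
      radicand a α c s ^ (-(1 / 2) : ℂ)) volume 0 1 ∧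
    HasDerivAt (sqrtIntegral a α) (∫ s in (0 : ℝ)..1,
      ((Real.sin a * s ^ α / 2 : ℝ) : ℂ) * radicand a α c s ^ (-(1 / 2) : ℂ)) c := by
  refine intervalIntegral.hasDerivAt_integral_of_dominated_loc_of_deriv_le
    (F := fun c s => radicand a α c s ^ (1 / 2 : ℂ))
    (F' := fun c s => ((Real.sin a * s ^ α / 2 : ℝ) : ℂ) * radicand a α c s ^ (-(1 / 2) : ℂ))
    (s := univ)
    (bound := fun s => Real.sin a / 2 *
      (Real.sin a ^ (-(1 / 2) : ℝ) * (1 - s ^ α) ^ (-(1 / 2) : ℝ)))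
    Filter.univ_mem ?_ (intervalIntegrable_sqrt_radicand hα a c) ?_ ?_ ?_ ?_
  · exact Filter.Eventually.of_forall fun c =>
      ((continuous_radicand hα a c).measurable.pow_const _).aestronglyMeasurable
  · have h1 := (continuous_radicand hα a c).measurable.pow_const (-(1 / 2) : ℂ)
    have h2 : Measurable fun s : ℝ => ((Real.sin a * s ^ α / 2 : ℝ) : ℂ) := by fun_prop
    exact (h2.mul h1).aestronglyMeasurable
  · refine ae_mem_uIoc_imp fun s hs c _ => ?_
    rw [norm_mul]
    have h0 : 0 ≤ s ^ α := Real.rpow_nonneg hs.1.le _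
    have h1 : s ^ α < 1 := rpow_lt_one_of_mem_Ioo hα hs
    refine mul_le_mul ?_ (norm_radicand_rpow_le ha hα hs) (norm_nonneg _) (by positivity)
    rw [Complex.norm_of_nonneg (by positivity)]
    nlinarith
  · exact ((intervalIntegrable_one_sub_rpow_rpow hα).const_mul _).const_mul _
  · refine ae_mem_uIoc_imp fun s hs c _ => ?_
    have h : HasDerivAt (fun c : ℝ => radicand a α c s) ((Real.sin a * s ^ α : ℝ) : ℂ) c := by
      have e : (fun c : ℝ => radicand a α c s) = fun c : ℝ =>
          radicand a α 0 s + (c : ℂ) * ((Real.sin a * s ^ α : ℝ) : ℂ) := by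
        funext c; apply Complex.ext <;> simp [radicand, -Complex.ofReal_mul, -Complex.ofReal_sin]
        ring
      rw [e]
      have h0 : HasDerivAt (fun c : ℝ => (c : ℂ)) 1 c := Complex.ofRealCLM.hasDerivAt
      exact ((h0.mul_const _).const_add _).congr_deriv (one_mul _)
    have h2 := (Complex.hasStrictDerivAt_cpow_const (c := (1 / 2 : ℂ))
      (radicand_mem_slitPlane (c := c) ha hα hs)).hasDerivAt.comp_of_eq c h rfl
    refine h2.congr_deriv ?_
    rw [show (1 / 2 : ℂ) - 1 = -(1 / 2) by norm_num]
    push_cast; ring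

/-- The derivative of `sqrtIntegral`, obtained from Euler's identity for homogeneous functions:
differentiate `s * √(radicand a α c s)` in `s`. -/
lemma hasDerivAt_sqrtIntegral {a α c : ℝ} (ha : 0 < Real.sin a) (hα : 0 < α)
    (hS : 0 ≤ Real.cos a + Real.sin a * c) :
    HasDerivAt (sqrtIntegral a α)
      ((((√(Real.cos a + Real.sin a * c) : ℝ) : ℂ) - sqrtIntegral a α c) /
        (α * (c - Complex.I))) c := by
  obtain ⟨hint, hd⟩ := hasDerivAt_sqrtIntegral_integral ha hα c
  convert hd using 1
  have hcI : (c : ℂ) - Complex.I ≠ 0 := fun h => by simpa using congrArg Complex.im h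
  have hα' : (α : ℂ) ≠ 0 := by exact_mod_cast hα.ne'
  have hv : ∀ s, radicand a α c s = Complex.exp (a * Complex.I) +
      ((s ^ α : ℝ) : ℂ) * ((Real.sin a : ℝ) * (c - Complex.I)) := fun s => by
    rw [Complex.exp_mul_I, ← Complex.ofReal_sin, ← Complex.ofReal_cos]
    apply Complex.ext <;> simp [radicand, -Complex.ofReal_sin, -Complex.ofReal_cos] <;> ring
  have key := intervalIntegral.integral_eq_sub_of_hasDerivAt_of_le (a := 0) (b := 1)
    (f := fun s : ℝ => (s : ℂ) * radicand a α c s ^ (1 / 2 : ℂ))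
    (f' := fun s => radicand a α c s ^ (1 / 2 : ℂ) + (α * (c - Complex.I)) *
      (((Real.sin a * s ^ α / 2 : ℝ) : ℂ) * radicand a α c s ^ (-(1 / 2) : ℂ)))
    zero_le_one ?_ ?_ ((intervalIntegrable_sqrt_radicand hα a c).add (hint.const_mul _))
  · rw [intervalIntegral.integral_add (intervalIntegrable_sqrt_radicand hα a c)
      (hint.const_mul _), intervalIntegral.integral_const_mul] at key
    have e2 : radicand a α c 1 ^ (1 / 2 : ℂ) = ((√(Real.cos a + Real.sin a * c) : ℝ) : ℂ) := by
      rw [radicand_one, Real.sqrt_eq_rpow, Complex.ofReal_cpow hS]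
      norm_num
    rw [e2] at key
    simp only [Complex.ofReal_one, one_mul, Complex.ofReal_zero, zero_mul, sub_zero] at key
    rw [← key, sqrtIntegral]
    field_simp
    ring
  · intro s hs
    refine Complex.continuous_ofReal.continuousWithinAt.mul
      (continuousWithinAt_sqrt_of_slitPlane_or_zero
        (continuous_radicand hα a c).continuousWithinAt ?_)
    rcases eq_or_lt_of_le hs.2 with rfl | h1
    · rcases eq_or_lt_of_le hS with h | h
      · right; rw [radicand_one, ← h]; simp
      · left; rw [radicand_one]; exact Complex.ofReal_mem_slitPlane.2 h
    · left
      exact Or.inr (mul_pos ha (sub_pos.2 (Real.rpow_lt_one hs.1 h1 hα))).ne'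
  · intro s hs
    have hmem := radicand_mem_slitPlane (c := c) ha hα hs
    have h1 : HasDerivAt (fun s : ℝ => ((s ^ α : ℝ) : ℂ)) ((α * s ^ (α - 1) : ℝ) : ℂ) s :=
      (Real.hasDerivAt_rpow_const (Or.inl hs.1.ne')).ofReal_comp
    have h : HasDerivAt (radicand a α c)
        (((α * s ^ (α - 1) : ℝ) : ℂ) * ((Real.sin a : ℝ) * (c - Complex.I))) s := by
      rw [show radicand a α c = _ from funext hv]
      exact (h1.mul_const _).const_add _
    have h2 := (Complex.hasStrictDerivAt_cpow_const (c := (1 / 2 : ℂ)) hmem).hasDerivAt.comp_of_eq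
      s h rfl
    have h0 : HasDerivAt (fun c : ℝ => (c : ℂ)) 1 s := Complex.ofRealCLM.hasDerivAt
    refine (h0.mul h2).congr_deriv ?_
    rw [show (1 / 2 : ℂ) - 1 = -(1 / 2) by norm_num]
    have h4 : s ^ α = s * s ^ (α - 1) := by
      rw [Real.rpow_sub_one hs.1.ne']; field_simp [hs.1.ne']
    rw [h4]
    simp only [Function.comp]
    push_cast; ring

lemma continuous_sqrtIntegral {a α : ℝ} (ha : 0 < Real.sin a) (hα : 0 < α) :
    Continuous (sqrtIntegral a α) :=
  continuous_iff_continuousAt.2 fun c => (hasDerivAt_sqrtIntegral_integral ha hα c).2.continuousAt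

/-- The scale factor `(sin a / sin θ)^(1/α)`. -/
noncomputable def scale (a α θ : ℝ) : ℝ := (Real.sin a / Real.sin θ) ^ (1 / α)

/-- The value `cos a - sin a * cot θ` of the radicand at the right end point. -/
noncomputable def endValue (a θ : ℝ) : ℝ := Real.cos a + Real.sin a * (-Real.cos θ / Real.sin θ)

/-- The integral of `√(e^{ia} - e^{iθ} t^α)` over `[0, scale a α θ]`, after rescaling to
`[0, 1]`. -/
noncomputable def rayIntegral (a α θ : ℝ) : ℂ :=
  (scale a α θ : ℂ) * sqrtIntegral a α (-Real.cos θ / Real.sin θ)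

lemma hasDerivAt_neg_cot {θ : ℝ} (h : Real.sin θ ≠ 0) :
    HasDerivAt (fun θ => -Real.cos θ / Real.sin θ) (1 / Real.sin θ ^ 2) θ := by
  refine ((Real.hasDerivAt_cos θ).neg.div (Real.hasDerivAt_sin θ) h).congr_deriv ?_
  rw [← Real.sin_sq_add_cos_sq θ]
  simp only [Pi.neg_apply]
  ring

lemma hasDerivAt_scale {a α θ : ℝ} (ha : 0 < Real.sin a) (h : 0 < Real.sin θ) :
    HasDerivAt (scale a α) (1 / α * scale a α θ * (-Real.cos θ / Real.sin θ)) θ := by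
  have h1 : HasDerivAt (fun θ => Real.sin a / Real.sin θ)
      (Real.sin a * (-Real.cos θ / Real.sin θ ^ 2)) θ := by
    simpa [div_eq_mul_inv] using ((Real.hasDerivAt_sin θ).inv h.ne').const_mul (Real.sin a)
  have h0 : 0 < Real.sin a / Real.sin θ := div_pos ha h
  refine (h1.rpow_const (p := 1 / α) (Or.inl h0.ne')).congr_deriv ?_
  rw [Real.rpow_sub_one h0.ne', scale]
  field_simp

lemma endValue_eq {a θ : ℝ} (h : Real.sin θ ≠ 0) :
    endValue a θ = Real.sin (θ - a) / Real.sin θ := by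
  rw [endValue, Real.sin_sub]; field_simp; ring

lemma endValue_pos {a θ : ℝ} (ha : 0 < a) (h : θ ∈ Ioo a Real.pi) : 0 < endValue a θ := by
  have h1 : 0 < Real.sin θ := Real.sin_pos_of_pos_of_lt_pi (ha.trans h.1) h.2
  rw [endValue_eq h1.ne']
  exact div_pos (Real.sin_pos_of_pos_of_lt_pi (sub_pos.2 h.1) (by linarith [h.2])) h1

lemma hasDerivAt_rayIntegral {a α θ : ℝ} (ha : 0 < a) (hα : 0 < α) (h : θ ∈ Ioo a Real.pi) :
    HasDerivAt (rayIntegral a α)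
      (1 / α * ((scale a α θ * √(endValue a θ) : ℝ) : ℂ) * (-Real.cos θ / Real.sin θ + Complex.I)
        - Complex.I / α * rayIntegral a α θ) θ := by
  have h1 : 0 < Real.sin θ := Real.sin_pos_of_pos_of_lt_pi (ha.trans h.1) h.2
  have h2 : 0 < Real.sin a := Real.sin_pos_of_pos_of_lt_pi ha (h.1.trans h.2)
  have h3 := (hasDerivAt_sqrtIntegral h2 hα (endValue_pos ha h).le).scomp_of_eq θ
    (hasDerivAt_neg_cot h1.ne') rfl
  refine ((hasDerivAt_scale (α := α) h2 h1).ofReal_comp.mul h3).congr_deriv ?_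
  have e : Real.cos a + Real.sin a * (-Real.cos θ / Real.sin θ) = endValue a θ := rfl
  have hI : (-Real.cos θ / Real.sin θ : ℂ) - Complex.I ≠ 0 := fun h => by
    have := congrArg Complex.im h
    rw [← Complex.ofReal_neg, ← Complex.ofReal_div] at this
    simp [-Complex.ofReal_neg, -Complex.ofReal_div] at this
  have hα' : (α : ℂ) ≠ 0 := by exact_mod_cast hα.ne'
  have hsin : (Real.sin θ : ℂ) ≠ 0 := by exact_mod_cast h1.ne'
  have hsq : (1 / Real.sin θ ^ 2 : ℂ) = (-Real.cos θ / Real.sin θ - Complex.I) *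
      (-Real.cos θ / Real.sin θ + Complex.I) := by
    have : (Real.sin θ : ℂ) ^ 2 + (Real.cos θ : ℂ) ^ 2 = 1 := by
      exact_mod_cast Real.sin_sq_add_cos_sq θ
    field_simp
    linear_combination -this + (Real.sin θ : ℂ) ^ 2 * Complex.I_sq
  simp only [Function.comp, rayIntegral, e, Complex.real_smul, Complex.ofReal_div,
    Complex.ofReal_mul, Complex.ofReal_one, Complex.ofReal_pow, Complex.ofReal_neg]
  rw [hsq]
  generalize sqrtIntegral a α (-Real.cos θ / Real.sin θ) = m
  generalize (-Real.cos θ / Real.sin θ : ℂ) = k at hI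
  field_simp
  ring

lemma continuousOn_rayIntegral {a α : ℝ} (ha : 0 < Real.sin a) (hα : 0 < α) :
    ContinuousOn (rayIntegral a α) (Ioo 0 Real.pi) := by
  intro θ h
  have h1 : 0 < Real.sin θ := Real.sin_pos_of_pos_of_lt_pi h.1 h.2
  refine ContinuousAt.continuousWithinAt ?_
  refine (Complex.continuous_ofReal.continuousAt.comp
    (hasDerivAt_scale (α := α) ha h1).continuousAt).mul ?_
  exact (continuous_sqrtIntegral ha hα).continuousAt.comp (hasDerivAt_neg_cot h1.ne').continuousAt

lemma hasDerivAt_rayIntegral_re {a α θ : ℝ} (ha : 0 < a) (hα : 0 < α) (h : θ ∈ Ioo a Real.pi) :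
    HasDerivAt (fun θ => (rayIntegral a α θ).re)
      (1 / α * (scale a α θ * √(endValue a θ) * (-Real.cos θ / Real.sin θ)
        + (rayIntegral a α θ).im)) θ := by
  refine (Complex.reCLM.hasFDerivAt.comp_hasDerivAt θ
    (hasDerivAt_rayIntegral ha hα h)).congr_deriv ?_
  have : (1 / α * ((scale a α θ * √(endValue a θ) : ℝ) : ℂ) *
      (-Real.cos θ / Real.sin θ + Complex.I) - Complex.I / α * rayIntegral a α θ) =
      ((1 / α : ℝ) : ℂ) * (((scale a α θ * √(endValue a θ) : ℝ) : ℂ) *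
      (((-Real.cos θ / Real.sin θ : ℝ) : ℂ) + Complex.I) - Complex.I * rayIntegral a α θ) := by
    push_cast; ring
  rw [this, Complex.reCLM_apply, Complex.re_ofReal_mul, Complex.sub_re, Complex.re_ofReal_mul]
  simp [-Complex.ofReal_neg, -Complex.ofReal_div]

lemma hasDerivAt_rayIntegral_im {a α θ : ℝ} (ha : 0 < a) (hα : 0 < α) (h : θ ∈ Ioo a Real.pi) :
    HasDerivAt (fun θ => (rayIntegral a α θ).im)
      (1 / α * (scale a α θ * √(endValue a θ) - (rayIntegral a α θ).re)) θ := by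
  refine (Complex.imCLM.hasFDerivAt.comp_hasDerivAt θ
    (hasDerivAt_rayIntegral ha hα h)).congr_deriv ?_
  have : (1 / α * ((scale a α θ * √(endValue a θ) : ℝ) : ℂ) *
      (-Real.cos θ / Real.sin θ + Complex.I) - Complex.I / α * rayIntegral a α θ) =
      ((1 / α : ℝ) : ℂ) * (((scale a α θ * √(endValue a θ) : ℝ) : ℂ) *
      (((-Real.cos θ / Real.sin θ : ℝ) : ℂ) + Complex.I) - Complex.I * rayIntegral a α θ) := by
    push_cast; ring
  rw [this, Complex.imCLM_apply, Complex.im_ofReal_mul, Complex.sub_im, Complex.im_ofReal_mul]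
  simp [-Complex.ofReal_neg, -Complex.ofReal_div]

/-- The numerator of the derivative of `Im (rayIntegral a α θ) / sin (θ / α)`. -/
noncomputable def slopeNumerator (a α θ : ℝ) : ℝ :=
  scale a α θ * √(endValue a θ) * Real.sin (θ / α) -
    ((rayIntegral a α θ).re * Real.sin (θ / α) + (rayIntegral a α θ).im * Real.cos (θ / α))

lemma hasDerivAt_slopeNumerator {a α θ : ℝ} (ha : 0 < a) (hα : 0 < α) (h : θ ∈ Ioo a Real.pi) :
    HasDerivAt (slopeNumerator a α)
      (scale a α θ * (Real.sin a / Real.sin θ ^ 2 / (2 * √(endValue a θ))) * Real.sin (θ / α)) θ := by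
  have h1 : 0 < Real.sin θ := Real.sin_pos_of_pos_of_lt_pi (ha.trans h.1) h.2
  have h2 : 0 < Real.sin a := Real.sin_pos_of_pos_of_lt_pi ha (h.1.trans h.2)
  have hS : HasDerivAt (endValue a) (Real.sin a / Real.sin θ ^ 2) θ :=
    (((hasDerivAt_neg_cot h1.ne').const_mul (Real.sin a)).const_add _).congr_deriv (by ring)
  have hs : HasDerivAt (fun θ => Real.sin (θ / α)) (Real.cos (θ / α) * (1 / α)) θ :=
    ((hasDerivAt_id θ).div_const α).sin
  have hc : HasDerivAt (fun θ => Real.cos (θ / α)) (-Real.sin (θ / α) * (1 / α)) θ :=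
    ((hasDerivAt_id θ).div_const α).cos
  have key := (((hasDerivAt_scale (α := α) h2 h1).mul
    (hS.sqrt (endValue_pos ha h).ne')).mul hs).sub
    (((hasDerivAt_rayIntegral_re ha hα h).mul hs).add ((hasDerivAt_rayIntegral_im ha hα h).mul hc))
  refine key.congr_deriv ?_
  simp only [Pi.mul_apply]
  ring

lemma hasDerivAt_rayIntegral_im_div_sin {a α θ : ℝ} (ha : 0 < a) (hα : 0 < α)
    (h : θ ∈ Ioo a Real.pi) (hsin : Real.sin (θ / α) ≠ 0) :
    HasDerivAt (fun θ => (rayIntegral a α θ).im / Real.sin (θ / α))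
      (1 / α * slopeNumerator a α θ / Real.sin (θ / α) ^ 2) θ := by
  have hs : HasDerivAt (fun θ => Real.sin (θ / α)) (Real.cos (θ / α) * (1 / α)) θ :=
    ((hasDerivAt_id θ).div_const α).sin
  refine ((hasDerivAt_rayIntegral_im ha hα h).div hs hsin).congr_deriv ?_
  rw [slopeNumerator]
  ring

lemma slopeNumerator_pos {a α θ : ℝ} (ha : 0 < a) (hα : 0 < α)
    (h : θ ∈ Ioo a (min Real.pi (Real.pi * α)))
    (h0 : slopeNumerator a α a = 0) : 0 < slopeNumerator a α θ := by
  have hπ : θ < Real.pi := h.2.trans_le (min_le_left _ _)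
  have hπα : θ < Real.pi * α := h.2.trans_le (min_le_right _ _)
  have hsub : Icc a θ ⊆ Ioo 0 Real.pi := fun x hx => ⟨ha.trans_le hx.1, hx.2.trans_lt hπ⟩
  have h2 : 0 < Real.sin a := Real.sin_pos_of_pos_of_lt_pi ha (h.1.trans hπ)
  have hpos : ∀ x ∈ Ioo (0 : ℝ) Real.pi, 0 < Real.sin x := fun x hx =>
    Real.sin_pos_of_pos_of_lt_pi hx.1 hx.2
  have hcont : ContinuousOn (slopeNumerator a α) (Icc a θ) := by
    have c1 := (continuousOn_rayIntegral h2 hα).mono hsub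
    have c2 : ContinuousOn (scale a α) (Icc a θ) := fun x hx =>
      (hasDerivAt_scale h2 (hpos x (hsub hx))).continuousAt.continuousWithinAt
    have c3 : ContinuousOn (endValue a) (Icc a θ) := fun x hx =>
      ((((hasDerivAt_neg_cot (hpos x (hsub hx)).ne').const_mul (Real.sin a)).const_add
        _).continuousAt).continuousWithinAt
    have c4 := Complex.continuous_re.comp_continuousOn c1
    have c5 := Complex.continuous_im.comp_continuousOn c1
    have c6 : Continuous fun θ => Real.sin (θ / α) := by fun_prop
    have c7 : Continuous fun θ => Real.cos (θ / α) := by fun_prop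
    exact ((c2.mul c3.sqrt).mul c6.continuousOn).sub
      ((c4.mul c6.continuousOn).add (c5.mul c7.continuousOn))
  have hmono : StrictMonoOn (slopeNumerator a α) (Icc a θ) := by
    refine strictMonoOn_of_deriv_pos (convex_Icc _ _) hcont fun x hx => ?_
    rw [interior_Icc] at hx
    have hx' : x ∈ Ioo a Real.pi := ⟨hx.1, hx.2.trans hπ⟩
    rw [(hasDerivAt_slopeNumerator ha hα hx').deriv]
    have hx1 := hpos x (hsub ⟨hx.1.le, hx.2.le⟩)
    have hx2 : 0 < Real.sin (x / α) := by
      refine Real.sin_pos_of_pos_of_lt_pi (div_pos (ha.trans hx.1) hα) ?_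
      rw [div_lt_iff₀ hα]; exact hx.2.trans hπα
    have hx3 := Real.sqrt_pos.2 (endValue_pos ha hx')
    have hx4 : 0 < scale a α x := Real.rpow_pos_of_pos (div_pos h2 hx1) _
    positivity
  rw [← h0]
  exact hmono (left_mem_Icc.2 h.1.le) (right_mem_Icc.2 h.1.le) h.1

lemma strictMonoOn_rayIntegral_im_div_sin {a α : ℝ} (ha : 0 < a) (hα : 0 < α)
    (h0 : slopeNumerator a α a = 0) :
    StrictMonoOn (fun θ => (rayIntegral a α θ).im / Real.sin (θ / α))
      (Ico a (min Real.pi (Real.pi * α))) := by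
  rcases le_or_gt (min Real.pi (Real.pi * α)) a with hle | hlt
  · rw [Ico_eq_empty hle.not_gt]; simp [StrictMonoOn]
  have h2 : 0 < Real.sin a := Real.sin_pos_of_pos_of_lt_pi ha (hlt.trans_le (min_le_left _ _))
  have hsin : ∀ x ∈ Ico a (min Real.pi (Real.pi * α)), 0 < Real.sin (x / α) := fun x hx => by
    refine Real.sin_pos_of_pos_of_lt_pi (div_pos (ha.trans_le hx.1) hα) ?_
    rw [div_lt_iff₀ hα]; exact hx.2.trans_le (min_le_right _ _)
  refine strictMonoOn_of_deriv_pos (convex_Ico _ _) ?_ fun x hx => ?_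
  · refine (Complex.continuous_im.comp_continuousOn ((continuousOn_rayIntegral h2 hα).mono
      fun x hx => ⟨ha.trans_le hx.1, hx.2.trans_le (min_le_left _ _)⟩)).div
      (by fun_prop) fun x hx => (hsin x hx).ne'
  · rw [interior_Ico] at hx
    have hx1 := hsin x ⟨hx.1.le, hx.2⟩
    rw [(hasDerivAt_rayIntegral_im_div_sin ha hα ⟨hx.1, hx.2.trans_le (min_le_left _ _)⟩
      hx1.ne').deriv]
    have := slopeNumerator_pos ha hα hx h0
    positivity

lemma exp_mul_I_half_re_pos {a : ℝ} (ha : a ∈ Ioo 0 Real.pi) :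
    0 < (Complex.exp (Complex.I * ((a / 2 : ℝ) : ℂ))).re := by
  rw [mul_comm, Complex.exp_ofReal_mul_I_re]
  exact Real.cos_pos_of_mem_Ioo ⟨by linarith [ha.1, Real.pi_pos], by linarith [ha.2]⟩

lemma ofReal_mul_exp_cpow_half {a r : ℝ} (ha : a ∈ Ioo 0 Real.pi) (hr : 0 ≤ r) :
    ((r : ℂ) * Complex.exp (Complex.I * a)) ^ (1 / 2 : ℂ) =
      (√r : ℂ) * Complex.exp (Complex.I * ((a / 2 : ℝ) : ℂ)) := by
  rcases eq_or_lt_of_le hr with rfl | hr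
  · simp
  have h : (r : ℂ) * Complex.exp (Complex.I * a) =
      ((√r : ℂ) * Complex.exp (Complex.I * ((a / 2 : ℝ) : ℂ))) ^ 2 := by
    rw [mul_pow, ← Complex.exp_nat_mul, ← Complex.ofReal_pow, Real.sq_sqrt hr.le]
    congr 2; push_cast; ring
  rw [h, one_div, Complex.sq_cpow_two_inv]
  rw [Complex.re_ofReal_mul]
  exact mul_pos (Real.sqrt_pos.2 hr) (exp_mul_I_half_re_pos ha)

lemma rayIntegral_self {a α : ℝ} (ha : a ∈ Ioo 0 Real.pi) (hα : 0 < α) :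
    rayIntegral a α a = ((∫ ξ in (0 : ℝ)..1, √(1 - ξ ^ α) : ℝ) : ℂ) *
      Complex.exp (Complex.I * ((a / 2 : ℝ) : ℂ)) := by
  have h : Real.sin a ≠ 0 := (Real.sin_pos_of_pos_of_lt_pi ha.1 ha.2).ne'
  rw [rayIntegral, scale, div_self h, Real.one_rpow, Complex.ofReal_one, one_mul, sqrtIntegral,
    ← intervalIntegral.integral_ofReal, ← intervalIntegral.integral_mul_const]
  refine intervalIntegral.integral_congr fun s hs => ?_
  rw [uIcc_of_le zero_le_one] at hs
  have h1 : s ^ α ≤ 1 := Real.rpow_le_one hs.1 hs.2 hα.le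
  rw [← ofReal_mul_exp_cpow_half ha (sub_nonneg.2 h1)]
  congr 1
  rw [mul_comm Complex.I]
  apply Complex.ext <;> simp only [radicand, Complex.re_ofReal_mul, Complex.im_ofReal_mul,
    Complex.exp_ofReal_mul_I_re, Complex.exp_ofReal_mul_I_im] <;> field_simp
  ring

lemma integral_sqrt_one_sub_rpow_pos {α : ℝ} (hα : 0 < α) :
    0 < ∫ ξ in (0 : ℝ)..1, √(1 - ξ ^ α) := by
  refine intervalIntegral.intervalIntegral_pos_of_pos_on ?_ (fun s hs =>
    Real.sqrt_pos.2 (sub_pos.2 (rpow_lt_one_of_mem_Ioo hα hs))) one_pos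
  have : Continuous fun s : ℝ => s ^ α := Real.continuous_rpow_const hα.le
  exact Continuous.intervalIntegrable (by fun_prop) _ _

lemma integral_one_sub_rpow_pos {α : ℝ} (hα : 0 < α) :
    0 < ∫ ξ in (0 : ℝ)..1, (1 - ξ ^ α) := by
  refine intervalIntegral.intervalIntegral_pos_of_pos_on ?_ (fun s hs =>
    sub_pos.2 (rpow_lt_one_of_mem_Ioo hα hs)) one_pos
  have : Continuous fun s : ℝ => s ^ α := Real.continuous_rpow_const hα.le
  exact Continuous.intervalIntegrable (by fun_prop) _ _

lemma le_sqrt_radicand_im {a α c s : ℝ} (ha : 0 < Real.sin a) (hα : 0 < α)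
    (hs : s ∈ Icc (0 : ℝ) 1) :
    Real.sin a / (2 * √(2 + |c|)) * (1 - s ^ α) ≤ (radicand a α c s ^ (1 / 2 : ℂ)).im := by
  have h1 : s ^ α ≤ 1 := Real.rpow_le_one hs.1 hs.2 hα.le
  have him : 0 ≤ (radicand a α c s).im := mul_nonneg ha.le (sub_nonneg.2 h1)
  have hr0 : 0 ≤ (radicand a α c s ^ (1 / 2 : ℂ)).im := by
    rw [one_div, Complex.cpow_inv_two_im_eq_sqrt him]; positivity
  have hle : (radicand a α c s ^ (1 / 2 : ℂ)).re ≤ √(2 + |c|) :=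
    (Complex.re_le_norm _).trans (norm_sqrt_radicand_le hα hs)
  have hsq : (radicand a α c s ^ (1 / 2 : ℂ)) ^ 2 = radicand a α c s := by
    rw [one_div]; exact_mod_cast Complex.cpow_nat_inv_pow (radicand a α c s) two_ne_zero
  have h2 := congrArg Complex.im hsq
  rw [pow_two, Complex.mul_im] at h2
  have h3 : (radicand a α c s).im = Real.sin a * (1 - s ^ α) := rfl
  have hpos : 0 < √(2 + |c|) := Real.sqrt_pos.2 (by positivity)
  rw [div_mul_eq_mul_div, div_le_iff₀ (by positivity), ← h3, ← h2]
  nlinarith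

lemma le_sqrtIntegral_im {a α : ℝ} (ha : 0 < Real.sin a) (hα : 0 < α) (c : ℝ) :
    Real.sin a / (2 * √(2 + |c|)) * (∫ s in (0 : ℝ)..1, (1 - s ^ α)) ≤
      (sqrtIntegral a α c).im := by
  have hint := intervalIntegrable_sqrt_radicand hα a c
  have e : (sqrtIntegral a α c).im =
      ∫ s in (0 : ℝ)..1, (radicand a α c s ^ (1 / 2 : ℂ)).im :=
    (Complex.imCLM.intervalIntegral_comp_comm hint).symm
  rw [e, ← intervalIntegral.integral_const_mul]
  refine intervalIntegral.integral_mono_on zero_le_one ?_ ?_ fun s hs =>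
    le_sqrt_radicand_im ha hα hs
  · have : Continuous fun s : ℝ => s ^ α := Real.continuous_rpow_const hα.le
    exact Continuous.intervalIntegrable (by fun_prop) _ _
  · exact ⟨Complex.imCLM.integrable_comp hint.1, Complex.imCLM.integrable_comp hint.2⟩

lemma rayIntegral_im (a α θ : ℝ) : (rayIntegral a α θ).im =
    scale a α θ * (sqrtIntegral a α (-Real.cos θ / Real.sin θ)).im :=
  Complex.im_ofReal_mul _ _

lemma rayIntegral_im_pos {a α θ : ℝ} (ha : 0 < Real.sin a) (hα : 0 < α) (hθ : 0 < Real.sin θ) :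
    0 < (rayIntegral a α θ).im := by
  rw [rayIntegral_im]
  refine mul_pos (Real.rpow_pos_of_pos (div_pos ha hθ) _)
    (lt_of_lt_of_le ?_ (le_sqrtIntegral_im ha hα _))
  have := integral_one_sub_rpow_pos hα
  positivity

lemma exists_lt_rayIntegral_im {a α : ℝ} (ha : a ∈ Ioo 0 Real.pi) (hα : 0 < α) (hα2 : α < 2)
    (B : ℝ) : ∃ θ ∈ Ioo a Real.pi, B < (rayIntegral a α θ).im := by
  have hsa : 0 < Real.sin a := Real.sin_pos_of_pos_of_lt_pi ha.1 ha.2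
  set K := Real.sin a ^ (1 / α) * (Real.sin a / (2 * √2) * ∫ s in (0 : ℝ)..1, (1 - s ^ α)) with hK
  have hKpos : 0 < K := by
    have := integral_one_sub_rpow_pos hα
    positivity
  have hp : 0 < 1 / α - 1 / 2 := by
    rw [sub_pos]; exact one_div_lt_one_div_of_lt hα hα2
  have ht := ((tendsto_rpow_atTop hp).const_mul_atTop hKpos).eventually_gt_atTop B
  have hat : ∀ᶠ c : ℝ in Filter.atTop, a - Real.pi / 2 < Real.arctan c :=
    (Real.tendsto_arctan_atTop.mono_right nhdsWithin_le_nhds).eventually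
      (lt_mem_nhds (by linarith [ha.2]))
  obtain ⟨c, ⟨hB, hc⟩, hc2⟩ := ((ht.and hat).and (Filter.eventually_ge_atTop 2)).exists
  have hc0 : 0 < c := by linarith
  refine ⟨Real.arctan c + Real.pi / 2,
    ⟨by linarith, by linarith [Real.arctan_lt_pi_div_two c]⟩, hB.trans_le ?_⟩
  have hcos : 0 < Real.cos (Real.arctan c) := Real.cos_arctan_pos c
  have hcot : -Real.cos (Real.arctan c + Real.pi / 2) / Real.sin (Real.arctan c + Real.pi / 2) =
      c := by
    rw [Real.cos_add_pi_div_two, Real.sin_add_pi_div_two, neg_neg, ← Real.tan_eq_sin_div_cos,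
      Real.tan_arctan]
  have hscale : Real.sin a ^ (1 / α) * c ^ (1 / α) ≤
      scale a α (Real.arctan c + Real.pi / 2) := by
    rw [scale, ← Real.mul_rpow hsa.le hc0.le, Real.sin_add_pi_div_two]
    refine Real.rpow_le_rpow (by positivity) ?_ (by positivity)
    rw [le_div_iff₀ hcos, mul_assoc]
    have : c * Real.cos (Real.arctan c) ≤ 1 := by
      conv_lhs => rw [← Real.tan_arctan c, Real.arctan_tan (Real.neg_pi_div_two_lt_arctan c)
        (Real.arctan_lt_pi_div_two c), Real.tan_mul_cos hcos.ne']
      exact Real.sin_le_one _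
    nlinarith
  have hscale0 : 0 ≤ scale a α (Real.arctan c + Real.pi / 2) :=
    (by positivity : (0 : ℝ) ≤ Real.sin a ^ (1 / α) * c ^ (1 / α)).trans hscale
  have hI := integral_one_sub_rpow_pos hα
  have hsq : √(2 + |c|) ≤ √2 * c ^ (1 / 2 : ℝ) := by
    rw [← Real.sqrt_eq_rpow, ← Real.sqrt_mul zero_le_two, abs_of_pos hc0]
    exact Real.sqrt_le_sqrt (by linarith)
  rw [rayIntegral_im, hcot]
  calc K * c ^ (1 / α - 1 / 2) = Real.sin a ^ (1 / α) * c ^ (1 / α) *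
        (Real.sin a / (2 * (√2 * c ^ (1 / 2 : ℝ))) * ∫ s in (0 : ℝ)..1, (1 - s ^ α)) := by
        rw [Real.rpow_sub hc0, hK]; field_simp
    _ ≤ scale a α (Real.arctan c + Real.pi / 2) *
        (Real.sin a / (2 * √(2 + |c|)) * ∫ s in (0 : ℝ)..1, (1 - s ^ α)) := by
        have : 0 < √(2 + |c|) := Real.sqrt_pos.2 (by positivity)
        gcongr
    _ ≤ _ := mul_le_mul_of_nonneg_left (le_sqrtIntegral_im hsa hα c) hscale0

lemma exists_pos_rayIntegral_im_sub {a α : ℝ} (ha : a ∈ Ioo 0 (min Real.pi (Real.pi * α)))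
    (hα : 0 < α) (hα2 : α < 2) {B : ℝ} (hB : 0 ≤ B) :
    ∃ θ ∈ Ioo a (min Real.pi (Real.pi * α)),
      0 < (rayIntegral a α θ).im - 2 * Real.sin (θ / α) * B := by
  have ha' : a ∈ Ioo 0 Real.pi := ⟨ha.1, ha.2.trans_le (min_le_left _ _)⟩
  have hsa : 0 < Real.sin a := Real.sin_pos_of_pos_of_lt_pi ha'.1 ha'.2
  have hπ := Real.pi_pos
  rcases le_or_gt 1 α with h | h
  · obtain ⟨θ, hθ, h1⟩ := exists_lt_rayIntegral_im ha' hα hα2 (2 * B)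
    rw [min_eq_left (by nlinarith)]
    exact ⟨θ, hθ, by nlinarith [Real.sin_le_one (θ / α)]⟩
  · have hmem : Real.pi * α ∈ Ioo 0 Real.pi := ⟨by positivity, by nlinarith⟩
    rw [min_eq_right hmem.2.le] at ha ⊢
    have hcont : ContinuousAt (fun θ => (rayIntegral a α θ).im - 2 * Real.sin (θ / α) * B)
        (Real.pi * α) := by
      have h1 := (continuousOn_rayIntegral hsa hα).continuousAt (isOpen_Ioo.mem_nhds hmem)
      refine (Complex.continuous_im.continuousAt.comp h1).sub ?_
      exact Continuous.continuousAt (by fun_prop)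
    have hpos : 0 < (rayIntegral a α (Real.pi * α)).im -
        2 * Real.sin (Real.pi * α / α) * B := by
      rw [mul_div_cancel_right₀ _ hα.ne', Real.sin_pi]
      simpa using rayIntegral_im_pos hsa hα (Real.sin_pos_of_pos_of_lt_pi hmem.1 hmem.2)
    obtain ⟨θ, h1, h2⟩ := (((hcont.eventually (lt_mem_nhds hpos)).filter_mono
      (nhdsWithin_le_nhds (s := Iio (Real.pi * α)))).and (Ioo_mem_nhdsLT ha.2)).exists
    exact ⟨θ, h2, h1⟩

lemma t0_mem_Ioo {α : ℝ} (hα0 : 0 < α) (hα2 : α < 2) :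
    t0 α ∈ Ioo 0 (min Real.pi (Real.pi * α)) := by
  have hπ := Real.pi_pos
  refine ⟨by rw [t0]; positivity, lt_min ?_ ?_⟩ <;>
    rw [t0, div_lt_iff₀ (by linarith)]
  · nlinarith
  · nlinarith [mul_pos hπ (mul_pos hα0 hα0)]

lemma t0_div_eq {α : ℝ} (hα0 : 0 < α) : t0 α / α = Real.pi - t0 α / 2 := by
  rw [t0]; field_simp; ring

lemma slopeNumerator_t0 {α : ℝ} (hα0 : 0 < α) (hα2 : α < 2) :
    slopeNumerator (t0 α) α (t0 α) = 0 := by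
  have h := t0_mem_Ioo hα0 hα2
  have h' : t0 α ∈ Ioo 0 Real.pi := ⟨h.1, h.2.trans_le (min_le_left _ _)⟩
  have hs : Real.sin (t0 α) ≠ 0 := (Real.sin_pos_of_pos_of_lt_pi h'.1 h'.2).ne'
  rw [slopeNumerator, rayIntegral_self h' hα0, endValue_eq hs, t0_div_eq hα0, Real.sin_pi_sub,
    Real.cos_pi_sub, Complex.re_ofReal_mul, Complex.im_ofReal_mul, mul_comm Complex.I,
    Complex.exp_ofReal_mul_I_re, Complex.exp_ofReal_mul_I_im]
  simp only [sub_self, Real.sin_zero, zero_div, Real.sqrt_zero]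
  ring

lemma rayIntegral_eq_integral {a α θ : ℝ} (ha : 0 < Real.sin a) (hα : 0 < α)
    (hθ : 0 < Real.sin θ) :
    rayIntegral a α θ = ∫ t in (0 : ℝ)..scale a α θ,
      (Complex.exp (Complex.I * a) -
        Complex.exp (Complex.I * θ) * ((t ^ α : ℝ) : ℂ)) ^ (1 / 2 : ℂ) := by
  have h0 : 0 < Real.sin a / Real.sin θ := div_pos ha hθ
  have hZ : 0 < scale a α θ := Real.rpow_pos_of_pos h0 _
  have hZα : scale a α θ ^ α = Real.sin a / Real.sin θ := by
    rw [scale, one_div, Real.rpow_inv_rpow h0.le hα.ne']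
  have key := intervalIntegral.smul_integral_comp_mul_left (a := 0) (b := 1)
    (fun t : ℝ => (Complex.exp (Complex.I * a) -
        Complex.exp (Complex.I * θ) * ((t ^ α : ℝ) : ℂ)) ^ (1 / 2 : ℂ)) (scale a α θ)
  rw [mul_zero, mul_one] at key
  rw [← key, rayIntegral, Complex.real_smul, sqrtIntegral]
  congr 1
  refine intervalIntegral.integral_congr fun s hs => ?_
  rw [uIcc_of_le zero_le_one] at hs
  congr 1
  rw [Real.mul_rpow hZ.le hs.1, hZα, mul_comm Complex.I, mul_comm Complex.I]
  apply Complex.ext <;> simp only [radicand, Complex.re_mul_ofReal, Complex.im_mul_ofReal,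
    Complex.sub_re, Complex.sub_im, Complex.exp_ofReal_mul_I_re,
    Complex.exp_ofReal_mul_I_im] <;> field_simp
  ring

lemma continuousOn_sqrt_exp_sub {a α θ : ℝ} (ha : 0 < a) (hα : 0 < α)
    (h : θ ∈ Ico a Real.pi) (s : Set ℝ) :
    ContinuousOn (fun t : ℝ => (Complex.exp (Complex.I * a) -
      Complex.exp (Complex.I * θ) * ((t ^ α : ℝ) : ℂ)) ^ (1 / 2 : ℂ)) s := by
  intro t _
  have h1 : 0 < Real.sin θ := Real.sin_pos_of_pos_of_lt_pi (ha.trans_le h.1) h.2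
  have hc : Continuous fun s : ℝ => s ^ α := Real.continuous_rpow_const hα.le
  refine continuousWithinAt_sqrt_of_slitPlane_or_zero
    (Continuous.continuousWithinAt (by fun_prop)) ?_
  have hre : (Complex.exp (Complex.I * a) -
      Complex.exp (Complex.I * θ) * ((t ^ α : ℝ) : ℂ)).re =
      Real.cos a - Real.cos θ * t ^ α := by
    rw [Complex.sub_re, Complex.re_mul_ofReal, mul_comm Complex.I, mul_comm Complex.I,
      Complex.exp_ofReal_mul_I_re, Complex.exp_ofReal_mul_I_re]
  have him : (Complex.exp (Complex.I * a) -
      Complex.exp (Complex.I * θ) * ((t ^ α : ℝ) : ℂ)).im =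
      Real.sin a - Real.sin θ * t ^ α := by
    rw [Complex.sub_im, Complex.im_mul_ofReal, mul_comm Complex.I, mul_comm Complex.I,
      Complex.exp_ofReal_mul_I_im, Complex.exp_ofReal_mul_I_im]
  by_cases hz : Real.sin a - Real.sin θ * t ^ α = 0
  · have hS : 0 ≤ Real.cos a - Real.cos θ * t ^ α := by
      have e : Real.cos a - Real.cos θ * t ^ α = Real.sin (θ - a) / Real.sin θ := by
        rw [Real.sin_sub]; field_simp; linear_combination Real.cos θ * hz
      rw [e]
      exact div_nonneg (Real.sin_nonneg_of_nonneg_of_le_pi (sub_nonneg.2 h.1)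
        (by linarith [h.2])) h1.le
    rcases eq_or_lt_of_le hS with h0 | h0
    · right; apply Complex.ext
      · rw [hre, ← h0]; rfl
      · rw [him, hz]; rfl
    · left; left; rwa [hre]
  · left; right; rwa [him]

/-- For every `α ∈ (0,2)`, the function `ρ_α` has exactly one zero `θ₀(α)` in
the open interval `(t₀(α), min(π, πα))`.  Here `ρ` is any function satisfying the defining
property of `ρ_α`: for each `θ` in `[t₀(α), min(π, πα))` and each continuous branch `g` of
`√(e^{iθ}t^α − e^{it₀(α)})` on `[0, Z₀(θ)]` with `g 0 = −i e^{i t₀(α)/2}`,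
`ρ θ = Re ∫₀^{Z₀(θ)} g − 2 sin(θ/α) ∫₀¹ √(1−ξ^α) dξ`. -/
theorem stmt0 (α : ℝ) (hα0 : 0 < α) (hα2 : α < 2) (ρ : ℝ → ℝ)
    (hρ : ∀ θ ∈ Set.Ico (t0 α) (min Real.pi (Real.pi * α)), ∀ g : ℝ → ℂ,
      ContinuousOn g (Set.Icc 0 (Z0 α θ)) →
      (∀ t ∈ Set.Icc (0 : ℝ) (Z0 α θ),
        g t ^ 2 = Complex.exp (Complex.I * (θ : ℂ)) * ((t ^ α : ℝ) : ℂ)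
          - Complex.exp (Complex.I * ((t0 α : ℝ) : ℂ))) →
      g 0 = -Complex.I * Complex.exp (Complex.I * ((t0 α / 2 : ℝ) : ℂ)) →
      ρ θ = (∫ t in (0 : ℝ)..(Z0 α θ), g t).re
        - 2 * Real.sin (θ / α) * ∫ ξ in (0 : ℝ)..1, Real.sqrt (1 - ξ ^ α)) :
    ∃! θ₀, θ₀ ∈ Set.Ioo (t0 α) (min Real.pi (Real.pi * α)) ∧ ρ θ₀ = 0 := by
  have ht := t0_mem_Ioo hα0 hα2
  have ht' : t0 α ∈ Ioo 0 Real.pi := ⟨ht.1, ht.2.trans_le (min_le_left _ _)⟩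
  have hst : 0 < Real.sin (t0 α) := Real.sin_pos_of_pos_of_lt_pi ht'.1 ht'.2
  set C := ∫ ξ in (0 : ℝ)..1, √(1 - ξ ^ α) with hC
  have hCpos : 0 < C := integral_sqrt_one_sub_rpow_pos hα0
  have hρ_eq : ∀ θ ∈ Ico (t0 α) (min Real.pi (Real.pi * α)),
      ρ θ = (rayIntegral (t0 α) α θ).im - 2 * Real.sin (θ / α) * C := by
    intro θ hθ
    have hθ' : θ ∈ Ico (t0 α) Real.pi := ⟨hθ.1, hθ.2.trans_le (min_le_left _ _)⟩
    have hsθ : 0 < Real.sin θ := Real.sin_pos_of_pos_of_lt_pi (ht.1.trans_le hθ'.1) hθ'.2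
    rw [hρ θ hθ (fun t => -Complex.I * (Complex.exp (Complex.I * (t0 α : ℝ)) -
      Complex.exp (Complex.I * θ) * ((t ^ α : ℝ) : ℂ)) ^ (1 / 2 : ℂ)) ?_ ?_ ?_]
    · rw [intervalIntegral.integral_const_mul, rayIntegral_eq_integral hst hα0 hsθ]
      simp [Z0, scale]
    · exact continuousOn_const.mul (continuousOn_sqrt_exp_sub ht.1 hα0 hθ' _)
    · intro t _
      have hsq (z : ℂ) : (z ^ (1 / 2 : ℂ)) ^ 2 = z := by
        rw [one_div]; exact_mod_cast Complex.cpow_nat_inv_pow z two_ne_zero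
      rw [mul_pow, hsq, neg_sq, Complex.I_sq]
      ring
    · have := ofReal_mul_exp_cpow_half ht' zero_le_one
      rw [Real.sqrt_one, Complex.ofReal_one, one_mul, one_mul] at this
      simp only [Real.zero_rpow hα0.ne', Complex.ofReal_zero, mul_zero, sub_zero, this]
  have hzero : ∀ θ ∈ Ioo (t0 α) (min Real.pi (Real.pi * α)), ρ θ = 0 →
      (rayIntegral (t0 α) α θ).im / Real.sin (θ / α) = 2 * C := by
    intro θ hθ h0
    have hsin : 0 < Real.sin (θ / α) := by
      refine Real.sin_pos_of_pos_of_lt_pi (div_pos (ht.1.trans hθ.1) hα0) ?_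
      rw [div_lt_iff₀ hα0]; exact hθ.2.trans_le (min_le_right _ _)
    rw [hρ_eq θ ⟨hθ.1.le, hθ.2⟩] at h0
    rw [div_eq_iff hsin.ne']
    linarith
  obtain ⟨θ₁, hθ₁, hpos⟩ := exists_pos_rayIntegral_im_sub ht hα0 hα2 hCpos.le
  have hneg : (rayIntegral (t0 α) α (t0 α)).im - 2 * Real.sin (t0 α / α) * C < 0 := by
    have hs : 0 < Real.sin (t0 α / 2) :=
      Real.sin_pos_of_pos_of_lt_pi (by linarith [ht'.1]) (by linarith [ht'.1, ht'.2])
    rw [rayIntegral_self ht' hα0, t0_div_eq hα0, Real.sin_pi_sub, Complex.im_ofReal_mul,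
      mul_comm Complex.I, Complex.exp_ofReal_mul_I_im, ← hC]
    nlinarith
  have hcont : ContinuousOn (fun θ => (rayIntegral (t0 α) α θ).im - 2 * Real.sin (θ / α) * C)
      (Icc (t0 α) θ₁) := by
    refine (Complex.continuous_im.comp_continuousOn ((continuousOn_rayIntegral hst hα0).mono
      fun x hx => ⟨ht.1.trans_le hx.1, ?_⟩)).sub (by fun_prop)
    exact hx.2.trans_lt (hθ₁.2.trans_le (min_le_left _ _))
  obtain ⟨θ₀, hθ₀, h0⟩ := intermediate_value_Ioo hθ₁.1.le hcont ⟨hneg, hpos⟩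
  have hmem : θ₀ ∈ Ioo (t0 α) (min Real.pi (Real.pi * α)) := ⟨hθ₀.1, hθ₀.2.trans hθ₁.2⟩
  have hρ0 : ρ θ₀ = 0 := by rw [hρ_eq θ₀ ⟨hmem.1.le, hmem.2⟩]; exact h0
  refine ⟨θ₀, ⟨hmem, hρ0⟩, fun θ ⟨hθ, hθ0⟩ => ?_⟩
  exact (strictMonoOn_rayIntegral_im_div_sin ht.1 hα0 (slopeNumerator_t0 hα0 hα2)).injOn
    ⟨hθ.1.le, hθ.2⟩ ⟨hmem.1.le, hmem.2⟩
    ((hzero θ hθ hθ0).trans (hzero θ₀ hmem hρ0).symm)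
end

section
/- Let α > 0 and let c ∈ ℂ be nonzero with |arg c| < π. Then λ ∈ ℂ is an eigenvalue of 𝓛_{c,α} (i.e., some eigenfunction with eigenvalue λ exists) if and only if c^{−2/(α+2)}·λ (principal branch power) is an eigenvalue of 𝓛_{1,α}; moreover, every eigenvalue of 𝓛_{1,α} is a positive real number. Consequently all eigenvalues of 𝓛_{c,α} have the form λ = c^{2/(α+2)}·τ with τ > 0 independent of c. -/
open MeasureTheory Set

/-- `y` is an eigenfunction of the Dirichlet operator `𝓛_{c,α} = −d²/dx² + c·x^α` on
`L²(0,∞)` with eigenvalue `lam`. -/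
def IsEigenfunction (α : ℝ) (c lam : ℂ) (y : ℝ → ℂ) : Prop :=
  ContinuousOn y (Set.Ici 0) ∧
  y 0 = 0 ∧
  (∃ x ≥ (0 : ℝ), y x ≠ 0) ∧
  (∃ y' : ℝ → ℂ,
    (∀ x ∈ Set.Ioi (0 : ℝ), HasDerivAt y (y' x) x) ∧
    (∀ x ∈ Set.Ioi (0 : ℝ), HasDerivAt y' ((c * ((x ^ α : ℝ) : ℂ) - lam) * y x) x)) ∧
  MeasureTheory.IntegrableOn (fun x => ‖y x‖ ^ 2) (Set.Ioi 0)

/-- `lam` is an eigenvalue of `𝓛_{c,α}`. -/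
def IsEigenvalue (α : ℝ) (c lam : ℂ) : Prop := ∃ y : ℝ → ℂ, IsEigenfunction α c lam y

open Filter Topology

section ODE

variable {y y' q : ℝ → ℂ}

/-- A function with nonnegative derivative on a ray `[a, ∞)` is monotone there. -/
lemma monotoneOn_Ici_of_hasDerivAt {f f' : ℝ → ℝ} {a : ℝ}
    (hf : ∀ x, a ≤ x → HasDerivAt f (f' x) x) (hf' : ∀ x, a ≤ x → 0 ≤ f' x) :
    MonotoneOn f (Ici a) := by
  refine monotoneOn_of_hasDerivWithinAt_nonneg (f' := f') (convex_Ici a)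
    (fun x hx => (hf x hx).continuousAt.continuousWithinAt)
    (fun x hx => (hf x (interior_subset hx)).hasDerivWithinAt)
    (fun x hx => hf' x (interior_subset hx))

/-- A solution of `y'' = q y` with `q` continuous up to the origin has a one-sided derivative
there. -/
lemma exists_tendsto_deriv_zero (hq : Continuous q) (hy : ContinuousOn y (Ici 0))
    (hy' : ∀ x ∈ Ioi (0 : ℝ), HasDerivAt y' (q x * y x) x) :
    ∃ d, Tendsto y' (𝓝[>] 0) (𝓝 d) := by
  set g : ℝ → ℂ := fun x => q |x| * y |x| with hg
  have hgc : Continuous g := by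
    refine (hq.comp continuous_abs).mul ?_
    exact hy.comp_continuous continuous_abs (fun x => abs_nonneg x)
  set h : ℝ → ℂ := fun x => ∫ t in (0 : ℝ)..x, g t with hh
  have hder : ∀ x, HasDerivAt h (g x) x := fun x => hgc.integral_hasStrictDerivAt 0 x |>.hasDerivAt
  have hd : ∀ x ∈ Ioi (0 : ℝ), HasDerivAt (fun x => y' x - h x) 0 x := by
    intro x hx
    have := (hy' x hx).sub (hder x)
    have e : g x = q x * y x := by simp only [hg]; rw [abs_of_pos hx]
    rwa [e, sub_self] at this
  have hconst : ∀ x ∈ Ioi (0 : ℝ), y' x - h x = y' 1 - h 1 := by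
    intro x hx
    exact isOpen_Ioi.is_const_of_deriv_eq_zero (isPreconnected_Ioi)
      (fun z hz => (hd z hz).differentiableAt.differentiableWithinAt)
      (fun z hz => (hd z hz).deriv) hx (by simp)
  refine ⟨y' 1 - h 1 + h 0, ?_⟩
  have h1 : Tendsto (fun x => y' 1 - h 1 + h x) (𝓝[>] 0) (𝓝 (y' 1 - h 1 + h 0)) :=
    ((hder 0).continuousAt.tendsto.const_add _).mono_left nhdsWithin_le_nhds
  refine h1.congr' ?_
  filter_upwards [self_mem_nhdsWithin] with x hx
  rw [← hconst x hx]; ring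

/-- A solution of `y'' = q y` with vanishing Cauchy data at the origin is zero. -/
lemma eq_zero_of_tendsto_zero (hq : Continuous q)
    (hy : ∀ x ∈ Ioi (0 : ℝ), HasDerivAt y (y' x) x)
    (hy' : ∀ x ∈ Ioi (0 : ℝ), HasDerivAt y' (q x * y x) x)
    (h0 : Tendsto y (𝓝[>] 0) (𝓝 0)) (h0' : Tendsto y' (𝓝[>] 0) (𝓝 0)) :
    ∀ x ∈ Ioi (0 : ℝ), y x = 0 := by
  intro b hb
  have hb0 : 0 < b := hb
  obtain ⟨M, hM⟩ := isCompact_Icc.exists_bound_of_continuousOn (s := Icc 0 b) hq.continuousOn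
  set E : ℝ → ℝ := fun x => Real.exp (-((1 + M) * x)) * (‖y x‖ ^ 2 + ‖y' x‖ ^ 2) with hE
  have hder : ∀ x ∈ Ioi (0 : ℝ), HasDerivAt E
      (Real.exp (-((1 + M) * x)) * (-((1 + M) * 1)) * (‖y x‖ ^ 2 + ‖y' x‖ ^ 2) +
        Real.exp (-((1 + M) * x)) *
          (2 * inner ℝ (y x) (y' x) + 2 * inner ℝ (y' x) (q x * y x))) x := by
    intro x hx
    exact (((hasDerivAt_id x).const_mul (1 + M)).neg.exp).mul
      ((hy x hx).norm_sq.add (hy' x hx).norm_sq)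
  have hanti : ∀ a ∈ Ioo 0 b, E b ≤ E a := by
    intro a ha
    refine antitoneOn_of_deriv_nonpos (convex_Icc a b)
      (fun x hx => (hder x (ha.1.trans_le hx.1)).continuousAt.continuousWithinAt)
      (fun x hx => (hder x (ha.1.trans_le
        (interior_subset hx).1)).differentiableAt.differentiableWithinAt)
      (fun x hx => ?_) (left_mem_Icc.2 ha.2.le) (right_mem_Icc.2 ha.2.le) ha.2.le
    have hx' := interior_subset hx
    have hx0 : 0 < x := ha.1.trans_le hx'.1
    rw [(hder x hx0).deriv, mul_assoc, ← mul_add]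
    refine mul_nonpos_of_nonneg_of_nonpos (Real.exp_pos _).le ?_
    have i1 := real_inner_le_norm (y x) (y' x)
    have i2 := real_inner_le_norm (y' x) (q x * y x)
    rw [norm_mul] at i2
    have i3 := hM x ⟨hx0.le, hx'.2⟩
    have i4 : ‖y' x‖ * (‖q x‖ * ‖y x‖) ≤ M * (‖y' x‖ * ‖y x‖) := by
      calc _ = ‖q x‖ * (‖y' x‖ * ‖y x‖) := by ring
        _ ≤ _ := by gcongr
    have hM0 : 0 ≤ M := (norm_nonneg _).trans i3
    nlinarith [mul_nonneg (by linarith : 0 ≤ 1 + M) (sq_nonneg (‖y x‖ - ‖y' x‖))]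
  have hlim : Tendsto E (𝓝[>] 0) (𝓝 0) := by
    have h1 : Tendsto (fun x : ℝ => Real.exp (-((1 + M) * x))) (𝓝[>] 0)
        (𝓝 (Real.exp (-((1 + M) * 0)))) :=
      (Continuous.tendsto (by fun_prop) 0).mono_left nhdsWithin_le_nhds
    simpa using h1.mul ((h0.norm.pow 2).add (h0'.norm.pow 2))
  have hEb : E b ≤ 0 := by
    refine ge_of_tendsto hlim ?_
    filter_upwards [Ioo_mem_nhdsGT hb0] with a ha using hanti a ha
  have h2 : ‖y b‖ ^ 2 + ‖y' b‖ ^ 2 ≤ 0 := by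
    by_contra hc
    exact absurd hEb (not_le.2 (mul_pos (Real.exp_pos _) (not_le.1 hc)))
  have h3 : ‖y b‖ ^ 2 = 0 := le_antisymm (by nlinarith [sq_nonneg ‖y' b‖]) (sq_nonneg _)
  simpa using h3

/-- The rotated flux `Re (e ȳ y')`. -/
def flux (e : ℂ) (y y' : ℝ → ℂ) (x : ℝ) : ℝ := (e * (starRingEnd ℂ (y x) * y' x)).re

lemma abs_flux_le (e : ℂ) (y y' : ℝ → ℂ) (x : ℝ) :
    |flux e y y' x| ≤ ‖e‖ * (‖y x‖ * ‖y' x‖) := by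
  refine (Complex.abs_re_le_norm _).trans ?_
  simp

lemma hasDerivAt_flux (e : ℂ) {x : ℝ} (hy : HasDerivAt y (y' x) x)
    (hy' : HasDerivAt y' (q x * y x) x) :
    HasDerivAt (flux e y y') (e.re * ‖y' x‖ ^ 2 + (e * q x).re * ‖y x‖ ^ 2) x := by
  have h := (hy.const_mul (starRingEnd ℂ e)).inner ℝ hy'
  convert! h using 1
  · funext t
    simp only [flux, Complex.inner, map_mul, Complex.conj_conj]
    congr 1; ring
  · simp only [Complex.inner, map_mul, Complex.conj_conj, Complex.sq_norm, Complex.normSq_apply]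
    simp only [Complex.mul_re, Complex.mul_im, Complex.conj_re, Complex.conj_im]
    ring

/-- The flux of a square-integrable solution is nonpositive where it is controlled from below by
the kinetic energy. -/
lemma flux_nonpos {e : ℂ} {k X : ℝ} (hk : 0 < k) (hX : 0 < X) (he : k ≤ e.re)
    (hy : ∀ x ∈ Ioi (0 : ℝ), HasDerivAt y (y' x) x)
    (hy' : ∀ x ∈ Ioi (0 : ℝ), HasDerivAt y' (q x * y x) x)
    (heq : ∀ x, X ≤ x → 0 ≤ (e * q x).re)
    (hL2 : IntegrableOn (fun x => ‖y x‖ ^ 2) (Ioi 0)) :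
    ∀ x, X ≤ x → flux e y y' x ≤ 0 := by
  intro x₁ hx₁
  by_contra! hpos
  have hx₁0 : 0 < x₁ := hX.trans_le hx₁
  set N := flux e y y' with hN
  set N' : ℝ → ℝ := fun x => e.re * ‖y' x‖ ^ 2 + (e * q x).re * ‖y x‖ ^ 2 with hN'
  have hder : ∀ x, 0 < x → HasDerivAt N (N' x) x := fun x hx =>
    hasDerivAt_flux e (hy x hx) (hy' x hx)
  have hN'le : ∀ x, x₁ ≤ x → k * ‖y' x‖ ^ 2 ≤ N' x := fun x hx => by
    have h1 := mul_le_mul_of_nonneg_right he (sq_nonneg ‖y' x‖)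
    have h2 := mul_nonneg (heq x (hx₁.trans hx)) (sq_nonneg ‖y x‖)
    simp only [hN']; linarith
  have hmono : MonotoneOn N (Ici x₁) := monotoneOn_Ici_of_hasDerivAt
    (fun x hx => hder x (hx₁0.trans_le hx))
    (fun x hx => le_trans (by positivity) (hN'le x hx))
  have hNpos : ∀ x, x₁ ≤ x → 0 < N x := fun x hx =>
    hpos.trans_le (hmono self_mem_Ici hx hx)
  have hepos : 0 < ‖e‖ := hk.trans_le (he.trans (Complex.re_le_norm e))
  set κ := k / ‖e‖ ^ 2 with hκ
  have hκ0 : 0 < κ := by positivity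
  set V : ℝ → ℝ := fun x => ‖y x‖ ^ 2 with hV
  have hVc : ContinuousOn V (Ioi 0) := fun x hx =>
    ((hy x hx).continuousAt.norm.pow 2).continuousWithinAt
  have hI : ∀ x, x₁ ≤ x → HasDerivAt (fun x => ∫ t in x₁..x, V t) (V x) x := by
    intro x hx
    have hx0 : x ∈ Ioi (0 : ℝ) := hx₁0.trans_le hx
    refine intervalIntegral.integral_hasDerivAt_right ?_
      (hVc.stronglyMeasurableAtFilter isOpen_Ioi x hx0) (hVc.continuousAt (isOpen_Ioi.mem_nhds hx0))
    refine (intervalIntegrable_iff_integrableOn_Ioc_of_le hx).2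
      (hL2.mono_set fun t ht => hx₁0.trans ht.1)
  have hG : MonotoneOn (fun x => -(N x)⁻¹ + κ * (∫ t in x₁..x, V t) - 2 * κ * x) (Ici x₁) := by
    refine monotoneOn_Ici_of_hasDerivAt
      (f' := fun x => - (-(N' x) / (N x) ^ 2) + κ * V x - 2 * κ * 1) (fun x hx => ?_)
      (fun x hx => ?_)
    · exact (((hder x (hx₁0.trans_le hx)).fun_inv (hNpos x hx).ne').neg.add
        ((hI x hx).const_mul κ)).sub ((hasDerivAt_id x).const_mul (2 * κ))
    · have hNp := hNpos x hx
      have h1 : N x ≤ ‖e‖ * (‖y x‖ * ‖y' x‖) := (le_abs_self _).trans (abs_flux_le e y y' x)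
      have hVpos : 0 < V x := by
        rcases (sq_nonneg ‖y x‖).lt_or_eq with h | h
        · exact h
        · have : ‖y x‖ = 0 := by simpa using h.symm
          rw [this] at h1; simp at h1; linarith
      have h2 : N x ^ 2 ≤ ‖e‖ ^ 2 * (V x * ‖y' x‖ ^ 2) := by
        calc N x ^ 2 ≤ (‖e‖ * (‖y x‖ * ‖y' x‖)) ^ 2 := by gcongr
          _ = _ := by simp only [hV]; ring
      have h3 : κ / V x ≤ N' x / N x ^ 2 := by
        rw [div_le_div_iff₀ hVpos (by positivity)]
        calc κ * N x ^ 2 ≤ κ * (‖e‖ ^ 2 * (V x * ‖y' x‖ ^ 2)) := by gcongr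
          _ = (k * ‖y' x‖ ^ 2) * V x := by rw [hκ]; field_simp
          _ ≤ N' x * V x := by have := hN'le x hx; gcongr
      have h4 : 2 * κ ≤ κ / V x + κ * V x := by
        rw [div_add' _ _ _ hVpos.ne', le_div_iff₀ hVpos]
        nlinarith [mul_nonneg hκ0.le (sq_nonneg (V x - 1))]
      have h5 : - (-(N' x) / (N x) ^ 2) = N' x / N x ^ 2 := by ring
      simp only [h5]; linarith
  set J := ∫ t in Ioi (0 : ℝ), V t with hJ
  have hIJ : ∀ x, x₁ ≤ x → ∫ t in x₁..x, V t ≤ J := by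
    intro x hx
    rw [intervalIntegral.integral_of_le hx]
    exact setIntegral_mono_set hL2 (ae_of_all _ fun t => sq_nonneg _)
      (LE.le.eventuallyLE fun t ht => hx₁0.trans ht.1)
  have hfin : ∀ x, x₁ ≤ x → 2 * κ * x ≤ κ * J + (N x₁)⁻¹ + 2 * κ * x₁ := by
    intro x hx
    have h1 := hG self_mem_Ici hx hx
    simp only [intervalIntegral.integral_same, mul_zero, add_zero] at h1
    have h2 := mul_le_mul_of_nonneg_left (hIJ x hx) hκ0.le
    have h3 := inv_pos.2 (hNpos x hx)
    linarith
  have h := hfin (max x₁ ((κ * J + (N x₁)⁻¹ + 2 * κ * x₁) / (2 * κ) + 1)) (le_max_left _ _)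
  have h' := mul_le_mul_of_nonneg_left
    (le_max_right x₁ ((κ * J + (N x₁)⁻¹ + 2 * κ * x₁) / (2 * κ) + 1)) (by positivity : 0 ≤ 2 * κ)
  rw [mul_add, mul_div_cancel₀ _ (by positivity)] at h'
  linarith

end ODE

section PowerPotential

variable {y y' : ℝ → ℂ} {α : ℝ} {c lam e : ℂ}

lemma continuous_powerPotential (hα : 0 < α) (c lam : ℂ) :
    Continuous fun x : ℝ => c * ((x ^ α : ℝ) : ℂ) - lam := by
  have : Continuous fun x : ℝ => x ^ α := Real.continuous_rpow_const hα.le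
  fun_prop

lemma exists_le_of_integrableOn_sq (hL2 : IntegrableOn (fun x => ‖y x‖ ^ 2) (Ioi 0)) {x δ : ℝ}
    (hx : 0 < x) (hδ : 0 < δ) : ∃ t, x ≤ t ∧ ‖y t‖ ^ 2 ≤ δ := by
  by_contra! h
  have h1 : IntegrableOn (fun _ : ℝ => δ) (Ioi x) := by
    refine Integrable.mono' (hL2.mono_set (Ioi_subset_Ioi hx.le)) aestronglyMeasurable_const ?_
    refine (ae_restrict_iff' measurableSet_Ioi).2 (ae_of_all _ fun t ht => ?_)
    rw [Real.norm_of_nonneg hδ.le]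
    exact (h t (le_of_lt ht)).le
  rw [integrableOn_const_iff] at h1
  rcases h1 with h1 | h1
  · exact hδ.ne' (by simpa using h1)
  · simp at h1

/-- Square-integrable solutions of `y'' = (c x^α - lam) y` decay exponentially, at a rate that
depends only on `Re e` and `Re (e c)` for a unit rotation `e`. -/
lemma exists_norm_sq_le_exp (hα : 0 < α) {k : ℝ} (hk : 0 < k) (he1 : ‖e‖ ≤ 1) (he : k ≤ e.re)
    (hec : k ≤ (e * c).re)
    (hy : ∀ x ∈ Ioi (0 : ℝ), HasDerivAt y (y' x) x)
    (hy' : ∀ x ∈ Ioi (0 : ℝ), HasDerivAt y' ((c * ((x ^ α : ℝ) : ℂ) - lam) * y x) x)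
    (hL2 : IntegrableOn (fun x => ‖y x‖ ^ 2) (Ioi 0)) :
    ∃ C X : ℝ, 0 < X ∧ ∀ x, X ≤ x →
      ‖y x‖ ^ 2 ≤ C * Real.exp (-(k / (α / 2 + 1) * x ^ (α / 2 + 1))) := by
  obtain ⟨X, hX1, hX⟩ : ∃ X : ℝ, 1 ≤ X ∧ ∀ x, X ≤ x → ‖lam‖ ≤ k / 2 * x ^ α := by
    have h := ((tendsto_rpow_atTop hα).const_mul_atTop (half_pos hk)).eventually_ge_atTop ‖lam‖
    obtain ⟨X, hX⟩ := eventually_atTop.1 h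
    exact ⟨max X 1, le_max_right _ _, fun x hx => hX x ((le_max_left _ _).trans hx)⟩
  have hX0 : 0 < X := by linarith
  have hpot : ∀ x, X ≤ x → k / 2 * x ^ α ≤ (e * (c * ((x ^ α : ℝ) : ℂ) - lam)).re := by
    intro x hx
    have h1 : (e * (c * ((x ^ α : ℝ) : ℂ) - lam)).re = (e * c).re * x ^ α - (e * lam).re := by
      rw [mul_sub, Complex.sub_re, ← mul_assoc, Complex.re_mul_ofReal]
    have h2 : (e * lam).re ≤ ‖lam‖ := by
      refine (Complex.re_le_norm _).trans ?_
      rw [norm_mul]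
      exact mul_le_of_le_one_left (norm_nonneg _) he1
    have h3 : 0 ≤ x ^ α := Real.rpow_nonneg (hX0.le.trans hx) _
    have h4 := mul_le_mul_of_nonneg_right hec h3
    have h5 := hX x hx
    rw [h1]; linarith
  set N := flux e y y' with hN
  set N' : ℝ → ℝ := fun x =>
    e.re * ‖y' x‖ ^ 2 + (e * (c * ((x ^ α : ℝ) : ℂ) - lam)).re * ‖y x‖ ^ 2 with hN'
  have hder : ∀ x, X ≤ x → HasDerivAt N (N' x) x := fun x hx =>
    hasDerivAt_flux (q := fun x => c * ((x ^ α : ℝ) : ℂ) - lam) e (hy x (hX0.trans_le hx))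
      (hy' x (hX0.trans_le hx))
  have hNnonpos : ∀ x, X ≤ x → N x ≤ 0 :=
    flux_nonpos (q := fun x => c * ((x ^ α : ℝ) : ℂ) - lam) hk hX0 he hy hy'
      (fun x hx => le_trans (by have := Real.rpow_nonneg (hX0.le.trans hx) α; positivity)
        (hpot x hx)) hL2
  have hN'le : ∀ x, X ≤ x → k * ‖y' x‖ ^ 2 + k / 2 * x ^ α * ‖y x‖ ^ 2 ≤ N' x := fun x hx => by
    have h1 := mul_le_mul_of_nonneg_right he (sq_nonneg ‖y' x‖)
    have h2 := mul_le_mul_of_nonneg_right (hpot x hx) (sq_nonneg ‖y x‖)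
    simp only [hN']; linarith
  have habs : ∀ x, |N x| ≤ ‖y x‖ * ‖y' x‖ := fun x =>
    (abs_flux_le e y y' x).trans (mul_le_of_le_one_left (by positivity) he1)
  set ρ := α / 2 + 1 with hρ
  have hρ0 : 0 < ρ := by positivity
  have hmonoN : MonotoneOn (fun x => N x * Real.exp (k / ρ * x ^ ρ)) (Ici X) := by
    refine monotoneOn_Ici_of_hasDerivAt (f' := fun x =>
      N' x * Real.exp (k / ρ * x ^ ρ) +
        N x * (Real.exp (k / ρ * x ^ ρ) * (k / ρ * (ρ * x ^ (ρ - 1))))) (fun x hx => ?_)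
      (fun x hx => ?_)
    · have hx0 : 0 < x := hX0.trans_le hx
      exact (hder x hx).mul
        ((Real.hasDerivAt_rpow_const (Or.inl hx0.ne')).const_mul (k / ρ)).exp
    · have hx0 : 0 < x := hX0.trans_le hx
      have e1 : k / ρ * (ρ * x ^ (ρ - 1)) = k * x ^ (α / 2) := by
        rw [← mul_assoc, div_mul_cancel₀ _ hρ0.ne', hρ, add_sub_cancel_right]
      have e2 : x ^ α = x ^ (α / 2) * x ^ (α / 2) := by
        rw [← Real.rpow_add hx0]; ring_nf
      have h1 := hN'le x hx
      have h2 := habs x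
      have h3 : -N x ≤ ‖y x‖ * ‖y' x‖ := (neg_le_abs _).trans h2
      have hp : 0 ≤ x ^ (α / 2) := Real.rpow_nonneg hx0.le _
      have h4 : k * x ^ (α / 2) * (-N x) ≤ k * x ^ (α / 2) * (‖y x‖ * ‖y' x‖) := by gcongr
      have h5 : 0 ≤ N' x + N x * (k * x ^ (α / 2)) := by
        rw [e2] at h1
        nlinarith [mul_nonneg hk.le (sq_nonneg (‖y' x‖ - x ^ (α / 2) * ‖y x‖)),
          mul_nonneg hk.le (sq_nonneg ‖y' x‖)]
      simp only [e1]
      nlinarith [mul_nonneg h5 (Real.exp_pos (k / ρ * x ^ ρ)).le]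
  have hmonoV : MonotoneOn (fun x => ‖y x‖ ^ 2 + 2 / k * N x) (Ici X) := by
    refine monotoneOn_Ici_of_hasDerivAt (f' := fun x =>
      2 * inner ℝ (y x) (y' x) + 2 / k * N' x) (fun x hx => ?_) (fun x hx => ?_)
    · exact (hy x (hX0.trans_le hx)).norm_sq.add ((hder x hx).const_mul (2 / k))
    · have h1 := hN'le x hx
      have h2 : -(‖y x‖ * ‖y' x‖) ≤ inner ℝ (y x) (y' x) :=
        (abs_le.1 (abs_real_inner_le_norm (y x) (y' x))).1
      have h3 : 1 ≤ x ^ α := Real.one_le_rpow (hX1.trans hx) hα.le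
      have h4 : k / 2 * (2 * ‖y' x‖ ^ 2 + ‖y x‖ ^ 2) ≤ N' x := by
        have : k / 2 * 1 * ‖y x‖ ^ 2 ≤ k / 2 * x ^ α * ‖y x‖ ^ 2 := by gcongr
        linarith
      have h5 : 2 * ‖y' x‖ ^ 2 + ‖y x‖ ^ 2 ≤ 2 / k * N' x := by
        calc _ = 2 / k * (k / 2 * (2 * ‖y' x‖ ^ 2 + ‖y x‖ ^ 2)) := by field_simp
          _ ≤ _ := by gcongr
      nlinarith [sq_nonneg (‖y x‖ - ‖y' x‖), sq_nonneg ‖y' x‖]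
  refine ⟨2 / k * (-(N X * Real.exp (k / ρ * X ^ ρ))), X, hX0, fun x hx => ?_⟩
  have hV : ‖y x‖ ^ 2 ≤ 2 / k * (-N x) := by
    refine le_of_forall_pos_le_add fun δ hδ => ?_
    obtain ⟨t, hxt, ht⟩ := exists_le_of_integrableOn_sq hL2 (hX0.trans_le hx) hδ
    have h1 := hmonoV hx (hx.trans hxt : X ≤ t) hxt
    have h2 : 2 / k * N t ≤ 0 :=
      mul_nonpos_of_nonneg_of_nonpos (by positivity) (hNnonpos t (hx.trans hxt))
    simp only at h1
    linarith
  have h1 : N X * Real.exp (k / ρ * X ^ ρ) ≤ N x * Real.exp (k / ρ * x ^ ρ) :=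
    hmonoN self_mem_Ici hx hx
  calc ‖y x‖ ^ 2 ≤ 2 / k * (-N x) := hV
    _ = 2 / k * (-(N x * Real.exp (k / ρ * x ^ ρ))) * Real.exp (-(k / ρ * x ^ ρ)) := by
        rw [Real.exp_neg]; field_simp
    _ ≤ _ := by gcongr

/-- Eigenvalues of `𝓛_{1,α}` are positive real numbers. -/
lemma IsEigenvalue.pos_of_one (hα : 0 < α) {τ : ℂ} (h : IsEigenvalue α 1 τ) :
    ∃ r : ℝ, 0 < r ∧ τ = (r : ℂ) := by
  obtain ⟨y, hyc, hy0, ⟨x₀, hx₀, hne⟩, ⟨y', hy, hy'⟩, hL2⟩ := h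
  by_contra hτ
  obtain ⟨e, he, heτ⟩ : ∃ e : ℂ, e.re = 1 ∧ (e * τ).re ≤ 0 := by
    by_cases him : τ.im = 0
    · refine ⟨1, by simp, ?_⟩
      by_contra! hre
      rw [one_mul] at hre
      exact hτ ⟨τ.re, hre, Complex.ext (by simp) (by simp [him])⟩
    · refine ⟨⟨1, τ.re / τ.im⟩, rfl, ?_⟩
      rw [Complex.mul_re]
      simp only
      rw [div_mul_cancel₀ _ him]; simp
  set q : ℝ → ℂ := fun x => 1 * ((x ^ α : ℝ) : ℂ) - τ with hq
  have hqc : Continuous q := continuous_powerPotential hα 1 τ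
  have hqre : ∀ x, 0 < x → x ^ α ≤ (e * q x).re := by
    intro x hx
    have h1 : (e * q x).re = x ^ α - (e * τ).re := by
      simp only [hq]
      rw [one_mul, mul_sub, Complex.sub_re, Complex.re_mul_ofReal, he, one_mul]
    linarith
  have hder : ∀ x, 0 < x → HasDerivAt (flux e y y')
      (e.re * ‖y' x‖ ^ 2 + (e * q x).re * ‖y x‖ ^ 2) x := fun x hx =>
    hasDerivAt_flux e (hy x hx) (hy' x hx)
  have hle : ∀ x, 0 < x → flux e y y' x ≤ 0 := fun x hx =>
    flux_nonpos (q := q) one_pos hx he.ge hy hy'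
      (fun t ht => (Real.rpow_nonneg (hx.le.trans ht) α).trans (hqre t (hx.trans_le ht)))
      hL2 x le_rfl
  have hder_nonneg : ∀ x, 0 < x → 0 ≤ e.re * ‖y' x‖ ^ 2 + (e * q x).re * ‖y x‖ ^ 2 := by
    intro x hx
    have h1 := (Real.rpow_nonneg hx.le α).trans (hqre x hx)
    rw [he]; positivity
  obtain ⟨d, hd⟩ := exists_tendsto_deriv_zero hqc hyc hy'
  have hlim0 : Tendsto y (𝓝[>] 0) (𝓝 0) := by
    have := (hyc 0 self_mem_Ici).mono_left (nhdsWithin_mono 0 Ioi_subset_Ici_self)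
    rwa [hy0] at this
  have hlim : Tendsto (flux e y y') (𝓝[>] 0) (𝓝 0) := by
    have h1 : Tendsto (fun x => ‖e‖ * (‖y x‖ * ‖y' x‖)) (𝓝[>] 0) (𝓝 0) := by
      simpa using (hlim0.norm.mul hd.norm).const_mul ‖e‖
    exact squeeze_zero_norm (fun x => abs_flux_le e y y' x) h1
  have hge : ∀ x, 0 < x → 0 ≤ flux e y y' x := by
    intro x hx
    refine le_of_tendsto hlim ?_
    filter_upwards [Ioo_mem_nhdsGT hx] with a ha
    exact monotoneOn_Ici_of_hasDerivAt (a := a) (fun t ht => hder t (ha.1.trans_le ht))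
      (fun t ht => hder_nonneg t (ha.1.trans_le ht)) self_mem_Ici (ha.2.le) ha.2.le
  have hx₀pos : 0 < x₀ := lt_of_le_of_ne hx₀ fun h => hne (h ▸ hy0)
  have hzero : HasDerivAt (flux e y y') 0 x₀ := by
    refine (hasDerivAt_const x₀ (0 : ℝ)).congr_of_eventuallyEq ?_
    filter_upwards [Ioi_mem_nhds hx₀pos] with x hx using le_antisymm (hle x hx) (hge x hx)
  have h1 := (hder x₀ hx₀pos).unique hzero
  have h2 : 0 < (e * q x₀).re * ‖y x₀‖ ^ 2 :=
    mul_pos ((Real.rpow_pos_of_pos hx₀pos α).trans_le (hqre x₀ hx₀pos)) (by positivity)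
  rw [he] at h1
  nlinarith [sq_nonneg ‖y' x₀‖]

end PowerPotential

section Series

open scoped Nat

/-- The exponents `1 + (α + 2) n + 2 m` of the generalised power series of the solutions of
`w'' = (z^α - μ) w`. -/
def seriesExponent (α : ℝ) (k : ℕ × ℕ) : ℝ := 1 + (α + 2) * k.1 + 2 * k.2

/-- The coefficients of the solution `z + ⋯` of `w'' = (z^α - μ) w`, up to powers of `-μ`. -/
noncomputable def seriesCoeff (α : ℝ) : ℕ → ℕ → ℝ
  | 0, 0 => 1
  | n + 1, 0 => seriesCoeff α n 0 /
      (seriesExponent α (n + 1, 0) * (seriesExponent α (n + 1, 0) - 1))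
  | 0, m + 1 => seriesCoeff α 0 m /
      (seriesExponent α (0, m + 1) * (seriesExponent α (0, m + 1) - 1))
  | n + 1, m + 1 => (seriesCoeff α n (m + 1) + seriesCoeff α (n + 1) m) /
      (seriesExponent α (n + 1, m + 1) * (seriesExponent α (n + 1, m + 1) - 1))
  termination_by n m => n + m

variable {α : ℝ}

lemma one_le_seriesExponent (hα : 0 < α) (k : ℕ × ℕ) : 1 ≤ seriesExponent α k := by
  unfold seriesExponent
  have : 0 ≤ (α + 2) * k.1 + 2 * k.2 := by positivity
  linarith

lemma sq_add_sq_le_seriesExponent (hα : 0 < α) (n m : ℕ) :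
    (n : ℝ) ^ 2 + (m : ℝ) ^ 2 ≤ seriesExponent α (n, m) * (seriesExponent α (n, m) - 1) := by
  have h : 2 * ((n : ℝ) + m) ≤ seriesExponent α (n, m) - 1 := by
    unfold seriesExponent
    have : 0 ≤ α * (n : ℝ) := by positivity
    simp only; linarith
  have hn : (0 : ℝ) ≤ n := by positivity
  have hm : (0 : ℝ) ≤ m := by positivity
  nlinarith

lemma seriesCoeff_nonneg (hα : 0 < α) : ∀ n m, 0 ≤ seriesCoeff α n m
  | 0, 0 => by rw [seriesCoeff]; exact zero_le_one
  | n + 1, 0 => by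
    rw [seriesCoeff]
    exact div_nonneg (seriesCoeff_nonneg hα n 0)
      (le_trans (by positivity) (sq_add_sq_le_seriesExponent hα (n + 1) 0))
  | 0, m + 1 => by
    rw [seriesCoeff]
    exact div_nonneg (seriesCoeff_nonneg hα 0 m)
      (le_trans (by positivity) (sq_add_sq_le_seriesExponent hα 0 (m + 1)))
  | n + 1, m + 1 => by
    rw [seriesCoeff]
    exact div_nonneg (add_nonneg (seriesCoeff_nonneg hα n (m + 1)) (seriesCoeff_nonneg hα (n + 1) m))
      (le_trans (by positivity) (sq_add_sq_le_seriesExponent hα (n + 1) (m + 1)))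
  termination_by n m => n + m

lemma seriesCoeff_le (hα : 0 < α) :
    ∀ n m : ℕ, seriesCoeff α n m ≤ 1 / ((n ! : ℝ) ^ 2) * (1 / (m ! : ℝ) ^ 2)
  | 0, 0 => by rw [seriesCoeff]; simp
  | n + 1, 0 => by
    have h := sq_add_sq_le_seriesExponent hα (n + 1) 0
    have h' : (0 : ℝ) < ((n + 1 : ℕ) : ℝ) ^ 2 + ((0 : ℕ) : ℝ) ^ 2 := by positivity
    rw [seriesCoeff, div_le_iff₀ (h'.trans_le h)]
    refine (seriesCoeff_le hα n 0).trans ?_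
    refine le_trans (le_of_eq ?_) (mul_le_mul_of_nonneg_left h (by positivity))
    rw [Nat.factorial_succ]; push_cast; field_simp; simp
  | 0, m + 1 => by
    have h := sq_add_sq_le_seriesExponent hα 0 (m + 1)
    have h' : (0 : ℝ) < ((0 : ℕ) : ℝ) ^ 2 + ((m + 1 : ℕ) : ℝ) ^ 2 := by positivity
    rw [seriesCoeff, div_le_iff₀ (h'.trans_le h)]
    refine (seriesCoeff_le hα 0 m).trans ?_
    refine le_trans (le_of_eq ?_) (mul_le_mul_of_nonneg_left h (by positivity))
    rw [Nat.factorial_succ]; push_cast; field_simp; simp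
  | n + 1, m + 1 => by
    have h := sq_add_sq_le_seriesExponent hα (n + 1) (m + 1)
    have h' : (0 : ℝ) < ((n + 1 : ℕ) : ℝ) ^ 2 + ((m + 1 : ℕ) : ℝ) ^ 2 := by positivity
    rw [seriesCoeff, div_le_iff₀ (h'.trans_le h)]
    refine (add_le_add (seriesCoeff_le hα n (m + 1)) (seriesCoeff_le hα (n + 1) m)).trans ?_
    refine le_trans (le_of_eq ?_) (mul_le_mul_of_nonneg_left h (by positivity))
    rw [Nat.factorial_succ, Nat.factorial_succ]; push_cast; field_simp
  termination_by n m => n + m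

lemma seriesExponent_mul_seriesCoeff (hα : 0 < α) (n m : ℕ) :
    seriesExponent α (n, m) * (seriesExponent α (n, m) - 1) * seriesCoeff α n m =
      (if n = 0 then 0 else seriesCoeff α (n - 1) m) +
        (if m = 0 then 0 else seriesCoeff α n (m - 1)) := by
  have h := sq_add_sq_le_seriesExponent hα n m
  rcases n with _ | n <;> rcases m with _ | m
  · simp [seriesExponent]
  all_goals
    rw [seriesCoeff, mul_div_cancel₀ _ (ne_of_gt (lt_of_lt_of_le (by positivity) h))]
    simp

/-- The terms of the `j`-th derivative of the solution, in the logarithmic variable. -/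
noncomputable def seriesTerm (α : ℝ) (μ : ℂ) (j : ℕ) (k : ℕ × ℕ) (ζ : ℂ) : ℂ :=
  (seriesExponent α k : ℂ) ^ j *
    ((seriesCoeff α k.1 k.2 : ℂ) * (-μ) ^ k.2 * Complex.exp (seriesExponent α k * ζ))

/-- The `j`-th derivative of `ζ ↦ w (exp ζ)`, where `w = z + ⋯` solves `w'' = (z^α - μ) w`. -/
noncomputable def logSolution (α : ℝ) (μ : ℂ) (j : ℕ) (ζ : ℂ) : ℂ :=
  ∑' k : ℕ × ℕ, seriesTerm α μ j k ζ

/-- A majorant of the terms of the series on `Re ζ ≤ R`. -/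
noncomputable def seriesBound (α : ℝ) (μ : ℂ) (R : ℝ) (k : ℕ × ℕ) : ℝ :=
  Real.exp R * ((Real.exp ((α + 2) / 2 * R) ^ k.1 / k.1 !) ^ 2 *
    ((√‖μ‖ * Real.exp R) ^ k.2 / k.2 !) ^ 2)

lemma hasSum_exp_series (t : ℝ) : HasSum (fun n : ℕ => t ^ n / n !) (Real.exp t) := by
  rw [Real.exp_eq_exp_ℝ]
  exact NormedSpace.expSeries_div_hasSum_exp t

lemma sq_exp_term_le {t : ℝ} (ht : 0 ≤ t) (n : ℕ) :
    (t ^ n / n !) ^ 2 ≤ Real.exp t * (t ^ n / n !) := by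
  rw [sq]
  exact mul_le_mul_of_nonneg_right (Real.pow_div_factorial_le_exp t ht n) (by positivity)

lemma summable_sq_exp_term {t : ℝ} (ht : 0 ≤ t) : Summable fun n : ℕ => (t ^ n / n !) ^ 2 :=
  Summable.of_nonneg_of_le (fun _ => sq_nonneg _) (sq_exp_term_le ht)
    ((hasSum_exp_series t).summable.mul_left _)

lemma tsum_sq_exp_term_le {t : ℝ} (ht : 0 ≤ t) :
    ∑' n : ℕ, (t ^ n / n !) ^ 2 ≤ Real.exp (2 * t) := by
  refine ((summable_sq_exp_term ht).tsum_le_tsum (sq_exp_term_le ht)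
    ((hasSum_exp_series t).summable.mul_left _)).trans (le_of_eq ?_)
  rw [tsum_mul_left, (hasSum_exp_series t).tsum_eq, two_mul, Real.exp_add]

lemma summable_seriesBound (α : ℝ) (μ : ℂ) (R : ℝ) : Summable (seriesBound α μ R) := by
  refine Summable.mul_left _ ?_
  have h1 := summable_sq_exp_term (Real.exp_pos ((α + 2) / 2 * R)).le
  have h2 := summable_sq_exp_term (by positivity : 0 ≤ √‖μ‖ * Real.exp R)
  exact h1.mul_of_nonneg h2 (fun _ => sq_nonneg _) (fun _ => sq_nonneg _)

lemma tsum_seriesBound_le (α : ℝ) (μ : ℂ) (R : ℝ) :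
    ∑' k, seriesBound α μ R k ≤ Real.exp R *
      (Real.exp (2 * Real.exp ((α + 2) / 2 * R)) * Real.exp (2 * (√‖μ‖ * Real.exp R))) := by
  have h1 := summable_sq_exp_term (Real.exp_pos ((α + 2) / 2 * R)).le
  have h2 := summable_sq_exp_term (by positivity : 0 ≤ √‖μ‖ * Real.exp R)
  unfold seriesBound
  rw [tsum_mul_left, ← h1.tsum_mul_tsum h2
    (h1.mul_of_nonneg h2 (fun _ => sq_nonneg _) (fun _ => sq_nonneg _))]
  refine mul_le_mul_of_nonneg_left ?_ (Real.exp_pos R).le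
  exact mul_le_mul (tsum_sq_exp_term_le (Real.exp_pos _).le)
    (tsum_sq_exp_term_le (by positivity)) (tsum_nonneg fun _ => sq_nonneg _) (Real.exp_pos _).le

lemma norm_seriesTerm_zero_le (hα : 0 < α) (μ : ℂ) (k : ℕ × ℕ) {ζ : ℂ} {R : ℝ} (h : ζ.re ≤ R) :
    ‖seriesTerm α μ 0 k ζ‖ ≤ seriesBound α μ R k := by
  have hp : 0 ≤ seriesExponent α k := zero_le_one.trans (one_le_seriesExponent hα k)
  have hre : ((seriesExponent α k : ℂ) * ζ).re = seriesExponent α k * ζ.re := by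
    rw [Complex.re_ofReal_mul]
  unfold seriesTerm
  rw [pow_zero, one_mul, norm_mul, norm_mul, norm_pow, norm_neg, Complex.norm_exp, hre,
    Complex.norm_real, Real.norm_of_nonneg (seriesCoeff_nonneg hα _ _)]
  calc seriesCoeff α k.1 k.2 * ‖μ‖ ^ k.2 * Real.exp (seriesExponent α k * ζ.re)
      ≤ (1 / ((k.1 ! : ℝ) ^ 2) * (1 / (k.2 ! : ℝ) ^ 2)) * ‖μ‖ ^ k.2 *
          Real.exp (seriesExponent α k * R) := by
        gcongr
        exact seriesCoeff_le hα _ _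
    _ = seriesBound α μ R k := by
        have e1 : Real.exp (seriesExponent α k * R) = Real.exp R *
            ((Real.exp ((α + 2) / 2 * R) ^ k.1) ^ 2 * (Real.exp R ^ k.2) ^ 2) := by
          unfold seriesExponent
          simp only [← Real.exp_nat_mul, ← Real.exp_add]
          congr 1; push_cast; ring
        have e2 : ‖μ‖ ^ k.2 = (√‖μ‖ ^ k.2) ^ 2 := by
          rw [← pow_mul, mul_comm, pow_mul, Real.sq_sqrt (norm_nonneg _)]
        rw [e1, e2, seriesBound, mul_pow]
        field_simp

lemma norm_seriesTerm_le (hα : 0 < α) (μ : ℂ) (j : ℕ) (k : ℕ × ℕ) {ζ : ℂ} {R : ℝ}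
    (h : ζ.re ≤ R) : ‖seriesTerm α μ j k ζ‖ ≤ j ! * seriesBound α μ (R + 1) k := by
  have hp : 0 ≤ seriesExponent α k := zero_le_one.trans (one_le_seriesExponent hα k)
  have h0 := norm_seriesTerm_zero_le hα μ k (ζ := ζ + 1) (R := R + 1) (by simpa using h)
  have h1 : seriesExponent α k ^ j ≤ j ! * Real.exp (seriesExponent α k) := by
    have := Real.pow_div_factorial_le_exp _ hp j
    rwa [div_le_iff₀' (by positivity)] at this
  refine le_trans ?_ (mul_le_mul_of_nonneg_left h0 (by positivity : (0 : ℝ) ≤ j !))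
  unfold seriesTerm
  rw [pow_zero, one_mul, mul_add, mul_one, Complex.exp_add]
  simp only [norm_mul, norm_pow, Complex.norm_real, Real.norm_of_nonneg hp, ← Complex.ofReal_exp,
    Real.norm_of_nonneg (Real.exp_pos (seriesExponent α k)).le]
  calc _ ≤ (j ! * Real.exp (seriesExponent α k)) * _ :=
        mul_le_mul_of_nonneg_right h1 (by positivity)
    _ = _ := by ring

lemma summable_seriesTerm (hα : 0 < α) (μ : ℂ) (j : ℕ) (ζ : ℂ) :
    Summable fun k => seriesTerm α μ j k ζ :=
  Summable.of_norm_bounded ((summable_seriesBound α μ (ζ.re + 1)).mul_left (j ! : ℝ))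
    fun k => norm_seriesTerm_le hα μ j k le_rfl

lemma hasDerivAt_seriesTerm (α : ℝ) (μ : ℂ) (j : ℕ) (k : ℕ × ℕ) (ζ : ℂ) :
    HasDerivAt (seriesTerm α μ j k) (seriesTerm α μ (j + 1) k ζ) ζ := by
  have h := ((((hasDerivAt_id ζ).const_mul (seriesExponent α k : ℂ)).cexp).const_mul
    ((seriesCoeff α k.1 k.2 : ℂ) * (-μ) ^ k.2)).const_mul ((seriesExponent α k : ℂ) ^ j)
  convert! h using 1
  simp only [seriesTerm, id]; ring

lemma hasDerivAt_logSolution (hα : 0 < α) (μ : ℂ) (j : ℕ) (ζ : ℂ) :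
    HasDerivAt (logSolution α μ j) (logSolution α μ (j + 1) ζ) ζ := by
  have hU : IsOpen {z : ℂ | z.re < ζ.re + 1} := isOpen_lt Complex.continuous_re continuous_const
  have hζ : ζ ∈ {z : ℂ | z.re < ζ.re + 1} := by simp
  have hu := (summable_seriesBound α μ (ζ.re + 1 + 1)).mul_left (j ! : ℝ)
  have hd : ∀ k, DifferentiableOn ℂ (seriesTerm α μ j k) {z : ℂ | z.re < ζ.re + 1} := fun k z _ =>
    (hasDerivAt_seriesTerm α μ j k z).differentiableAt.differentiableWithinAt
  have hb : ∀ (k : ℕ × ℕ) (w : ℂ), w ∈ {z : ℂ | z.re < ζ.re + 1} →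
      ‖seriesTerm α μ j k w‖ ≤ j ! * seriesBound α μ (ζ.re + 1 + 1) k := fun k w hw =>
    norm_seriesTerm_le hα μ j k (le_of_lt hw)
  have h1 := (Complex.differentiableOn_tsum_of_summable_norm hu hd hU hb).differentiableAt
    (hU.mem_nhds hζ)
  have h2 := Complex.hasSum_deriv_of_summable_norm hu hd hU hb hζ
  simp only [(hasDerivAt_seriesTerm α μ j _ ζ).deriv] at h2
  have h3 := h1.hasDerivAt
  rw [← h2.tsum_eq] at h3
  exact h3

lemma norm_logSolution_zero_le (hα : 0 < α) (μ : ℂ) (ζ : ℂ) :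
    ‖logSolution α μ 0 ζ‖ ≤ Real.exp (1 + 2 * √‖μ‖) *
      Real.exp ((3 + 2 * √‖μ‖) * Real.exp ((α + 2) / 2 * ζ.re)) := by
  have h1 : ‖logSolution α μ 0 ζ‖ ≤ ∑' k, seriesBound α μ ζ.re k :=
    tsum_of_norm_bounded (summable_seriesBound α μ ζ.re).hasSum
      fun k => norm_seriesTerm_zero_le hα μ k le_rfl
  refine h1.trans ((tsum_seriesBound_le α μ ζ.re).trans ?_)
  rw [← Real.exp_add, ← Real.exp_add, ← Real.exp_add]
  refine Real.exp_le_exp.2 ?_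
  have h2 : Real.exp ζ.re ≤ 1 + Real.exp ((α + 2) / 2 * ζ.re) := by
    rcases le_total ζ.re 0 with h | h
    · have := Real.exp_le_one_iff.2 h
      have := Real.exp_pos ((α + 2) / 2 * ζ.re)
      linarith
    · have : Real.exp ζ.re ≤ Real.exp ((α + 2) / 2 * ζ.re) := Real.exp_le_exp.2 (by nlinarith)
      linarith
  have h3 : ζ.re ≤ Real.exp ζ.re := by linarith [Real.add_one_le_exp ζ.re]
  nlinarith [mul_le_mul_of_nonneg_left h2 (Real.sqrt_nonneg ‖μ‖)]

/-- The differential equation in the logarithmic variable. -/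
lemma logSolution_two_sub_one (hα : 0 < α) (μ ζ : ℂ) :
    logSolution α μ 2 ζ - logSolution α μ 1 ζ =
      (Complex.exp ((α + 2) * ζ) - μ * Complex.exp (2 * ζ)) * logSolution α μ 0 ζ := by
  have hS := (summable_seriesTerm hα μ 0 ζ).hasSum
  set A : ℕ × ℕ → ℂ := fun k =>
    if k.1 = 0 then 0 else Complex.exp ((α + 2) * ζ) * seriesTerm α μ 0 (k.1 - 1, k.2) ζ with hA
  set B : ℕ × ℕ → ℂ := fun k =>
    if k.2 = 0 then 0 else -μ * Complex.exp (2 * ζ) * seriesTerm α μ 0 (k.1, k.2 - 1) ζ with hB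
  have hAsum : HasSum A (Complex.exp ((α + 2) * ζ) * logSolution α μ 0 ζ) := by
    have hinj : Function.Injective (fun k : ℕ × ℕ => (k.1 + 1, k.2)) := fun a b h => by
      simp only [Prod.mk.injEq, add_left_inj] at h; exact Prod.ext h.1 h.2
    refine (hinj.hasSum_iff fun k hk => ?_).1 ?_
    · simp only [hA]
      refine if_pos ?_
      by_contra h0
      exact hk ⟨(k.1 - 1, k.2), Prod.ext (Nat.sub_add_cancel (Nat.pos_of_ne_zero h0)) rfl⟩
    · simpa [hA, Function.comp_def, logSolution] using hS.mul_left (Complex.exp ((α + 2) * ζ))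
  have hBsum : HasSum B (-μ * Complex.exp (2 * ζ) * logSolution α μ 0 ζ) := by
    have hinj : Function.Injective (fun k : ℕ × ℕ => (k.1, k.2 + 1)) := fun a b h => by
      simp only [Prod.mk.injEq, add_left_inj] at h; exact Prod.ext h.1 h.2
    refine (hinj.hasSum_iff fun k hk => ?_).1 ?_
    · simp only [hB]
      refine if_pos ?_
      by_contra h0
      exact hk ⟨(k.1, k.2 - 1), Prod.ext rfl (Nat.sub_add_cancel (Nat.pos_of_ne_zero h0))⟩
    · simpa [hB, Function.comp_def, logSolution] using hS.mul_left (-μ * Complex.exp (2 * ζ))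
  have hdiff := (summable_seriesTerm hα μ 2 ζ).hasSum.sub (summable_seriesTerm hα μ 1 ζ).hasSum
  have hterm : ∀ k, seriesTerm α μ 2 k ζ - seriesTerm α μ 1 k ζ = A k + B k := by
    rintro ⟨n, m⟩
    have hrec := congrArg (fun t : ℝ => (t : ℂ)) (seriesExponent_mul_seriesCoeff hα n m)
    have h1 : seriesTerm α μ 2 (n, m) ζ - seriesTerm α μ 1 (n, m) ζ =
        ((seriesExponent α (n, m) * (seriesExponent α (n, m) - 1) * seriesCoeff α n m : ℝ) : ℂ) *
          ((-μ) ^ m * Complex.exp (seriesExponent α (n, m) * ζ)) := by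
      simp only [seriesTerm]; push_cast; ring
    rw [h1, hrec]
    rcases n with _ | n <;> rcases m with _ | m
    · simp [hA, hB]
    · simp only [hA, hB, seriesTerm, seriesExponent, if_true, Nat.add_eq_zero_iff, one_ne_zero,
        and_false, if_false, Nat.add_sub_cancel, pow_zero, one_mul, zero_add]
      have : Complex.exp (((1 + (α + 2) * (0 : ℕ) + 2 * (m + 1 : ℕ) : ℝ) : ℂ) * ζ) =
          Complex.exp (2 * ζ) * Complex.exp (((1 + (α + 2) * (0 : ℕ) + 2 * m : ℝ) : ℂ) * ζ) := by
        rw [← Complex.exp_add]; congr 1; push_cast; ring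
      rw [this]; push_cast; ring
    · simp only [hA, hB, seriesTerm, seriesExponent, if_true, Nat.add_eq_zero_iff, one_ne_zero,
        and_false, if_false, Nat.add_sub_cancel, pow_zero, one_mul, add_zero]
      have : Complex.exp (((1 + (α + 2) * (n + 1 : ℕ) + 2 * (0 : ℕ) : ℝ) : ℂ) * ζ) =
          Complex.exp ((α + 2) * ζ) *
            Complex.exp (((1 + (α + 2) * n + 2 * (0 : ℕ) : ℝ) : ℂ) * ζ) := by
        rw [← Complex.exp_add]; congr 1; push_cast; ring
      rw [this]; push_cast; ring
    · simp only [hA, hB, seriesTerm, seriesExponent, Nat.add_eq_zero_iff, one_ne_zero,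
        and_false, if_false, Nat.add_sub_cancel, pow_zero, one_mul]
      have e1 : Complex.exp (((1 + (α + 2) * (n + 1 : ℕ) + 2 * (m + 1 : ℕ) : ℝ) : ℂ) * ζ) =
          Complex.exp (2 * ζ) *
            Complex.exp (((1 + (α + 2) * (n + 1 : ℕ) + 2 * m : ℝ) : ℂ) * ζ) := by
        rw [← Complex.exp_add]; congr 1; push_cast; ring
      have e2 : Complex.exp (((1 + (α + 2) * (n + 1 : ℕ) + 2 * (m + 1 : ℕ) : ℝ) : ℂ) * ζ) =
          Complex.exp ((α + 2) * ζ) *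
            Complex.exp (((1 + (α + 2) * n + 2 * (m + 1 : ℕ) : ℝ) : ℂ) * ζ) := by
        rw [← Complex.exp_add]; congr 1; push_cast; ring
      rw [Complex.ofReal_add, add_mul]
      congr 1
      · rw [e2]; push_cast; ring
      · rw [e1]; push_cast; ring
  simp only [hterm] at hdiff
  refine (hdiff.unique (hAsum.add hBsum)).trans ?_
  ring

lemma tendsto_logSolution_mul_exp_neg (hα : 0 < α) (μ s : ℂ) (j : ℕ) :
    Tendsto (fun x : ℝ => logSolution α μ j (x + s) * Complex.exp (-(x + s))) atBot (𝓝 1) := by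
  have hterm : ∀ k (x : ℝ), seriesTerm α μ j k (x + s) * Complex.exp (-(x + s)) =
      seriesTerm α μ j k s * Complex.exp (-s) *
        ((Real.exp ((seriesExponent α k - 1) * x) : ℝ) : ℂ) := by
    intro k x
    have : Complex.exp (seriesExponent α k * (x + s)) * Complex.exp (-(x + s)) =
        Complex.exp (seriesExponent α k * s) * Complex.exp (-s) *
          Complex.exp (((seriesExponent α k - 1) * x : ℝ)) := by
      simp only [← Complex.exp_add]; congr 1; push_cast; ring
    rw [Complex.ofReal_exp]
    simp only [seriesTerm]
    linear_combination ((seriesExponent α k : ℂ) ^ j *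
      ((seriesCoeff α k.1 k.2 : ℂ) * (-μ) ^ k.2)) * this
  have hlim : Tendsto (fun x : ℝ => ∑' k : ℕ × ℕ,
      seriesTerm α μ j k (x + s) * Complex.exp (-(x + s))) atBot
      (𝓝 (∑' k : ℕ × ℕ, if k = (0, 0) then 1 else 0)) := by
    refine tendsto_tsum_of_dominated_convergence
      (bound := fun k => j ! * seriesBound α μ (s.re + 1) k * Real.exp (-s.re))
      (((summable_seriesBound α μ (s.re + 1)).mul_left _).mul_right _) (fun k => ?_) ?_
    · split_ifs with hk
      · subst hk
        refine tendsto_const_nhds.congr fun x => ?_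
        simp only [seriesTerm, seriesExponent, seriesCoeff]
        simp [← Complex.exp_add]
      · have hp : 0 < seriesExponent α k - 1 := by
          obtain ⟨n, m⟩ := k
          have hnm : 0 < n ∨ 0 < m := by
            by_contra! h
            exact hk (Prod.ext (by simpa using h.1) (by simpa using h.2))
          unfold seriesExponent
          have hn : 0 ≤ (α + 2) * (n : ℝ) := by positivity
          have hm : 0 ≤ 2 * (m : ℝ) := by positivity
          rcases hnm with h | h
          · have : 0 < (α + 2) * (n : ℝ) := by positivity
            linarith
          · have : 0 < 2 * (m : ℝ) := by positivity
            linarith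
        have h1 : Tendsto (fun x : ℝ => Real.exp ((seriesExponent α k - 1) * x)) atBot (𝓝 0) :=
          Real.tendsto_exp_atBot.comp (tendsto_id.const_mul_atBot hp)
        have h2 := ((Complex.continuous_ofReal.tendsto 0).comp h1).const_mul
          (seriesTerm α μ j k s * Complex.exp (-s))
        rw [Complex.ofReal_zero, mul_zero] at h2
        exact h2.congr fun x => (hterm k x).symm
    · filter_upwards [eventually_le_atBot 0] with x hx k
      have hp := one_le_seriesExponent hα k
      have h1 : Real.exp ((seriesExponent α k - 1) * x) ≤ 1 :=
        Real.exp_le_one_iff.2 (mul_nonpos_of_nonneg_of_nonpos (by linarith) hx)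
      rw [hterm, norm_mul, norm_mul, Complex.norm_exp, Complex.neg_re, Complex.norm_real,
        Real.norm_of_nonneg (Real.exp_pos _).le]
      refine (mul_le_of_le_one_right (by positivity) h1).trans ?_
      exact mul_le_mul_of_nonneg_right (norm_seriesTerm_le hα μ j k le_rfl) (Real.exp_pos _).le
  rw [tsum_ite_eq] at hlim
  refine hlim.congr fun x => ?_
  rw [tsum_mul_right]; rfl

end Series

section Rays

variable {α : ℝ}

lemma hasDerivAt_logSolution_ray (hα : 0 < α) (μ s : ℂ) (j : ℕ) {x : ℝ} (hx : 0 < x) :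
    HasDerivAt (fun x : ℝ => logSolution α μ j (Real.log x + s))
      (logSolution α μ (j + 1) (Real.log x + s) / x) x := by
  have h1 : HasDerivAt (fun x : ℝ => (Real.log x : ℂ) + s) ((x⁻¹ : ℝ) : ℂ) x :=
    (Real.hasDerivAt_log hx.ne').ofReal_comp.add_const s
  have h2 := (hasDerivAt_logSolution hα μ j (Real.log x + s)).comp x h1
  rwa [Complex.ofReal_inv, ← div_eq_mul_inv] at h2

lemma hasDerivAt_logSolution_ray_deriv (hα : 0 < α) (μ s : ℂ) {x : ℝ} (hx : 0 < x) :
    HasDerivAt (fun x : ℝ => logSolution α μ 1 (Real.log x + s) / x)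
      ((Complex.exp ((α + 2) * s) * ((x ^ α : ℝ) : ℂ) - μ * Complex.exp (2 * s)) *
        logSolution α μ 0 (Real.log x + s)) x := by
  have hx' : (x : ℂ) ≠ 0 := Complex.ofReal_ne_zero.2 hx.ne'
  have h := (hasDerivAt_logSolution_ray hα μ s 1 hx).div (hasDerivAt_id x).ofReal_comp hx'
  convert! h using 1
  have hode := logSolution_two_sub_one hα μ (Real.log x + s)
  have e0 : Complex.exp (Real.log x) = x := by rw [← Complex.ofReal_exp, Real.exp_log hx]
  have e1 : Complex.exp ((α + 2) * (Real.log x + s)) =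
      ((x ^ α : ℝ) : ℂ) * (x : ℂ) ^ 2 * Complex.exp ((α + 2) * s) := by
    rw [Real.rpow_def_of_pos hx, Complex.ofReal_exp]
    nth_rewrite 1 [← e0]
    rw [← Complex.exp_nat_mul, ← Complex.exp_add, ← Complex.exp_add]
    congr 1; push_cast; ring
  have e2 : Complex.exp (2 * (Real.log x + s)) = (x : ℂ) ^ 2 * Complex.exp (2 * s) := by
    nth_rewrite 1 [← e0]
    rw [← Complex.exp_nat_mul, ← Complex.exp_add]
    congr 1; push_cast; ring
  rw [e1, e2] at hode
  simp only [id, Complex.ofReal_one]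
  rw [eq_div_iff (pow_ne_zero 2 hx'), div_mul_cancel₀ _ hx', mul_one]
  norm_num at hode ⊢
  rw [hode]; ring

lemma tendsto_logSolution_ray_div (hα : 0 < α) (μ s : ℂ) (j : ℕ) :
    Tendsto (fun x : ℝ => logSolution α μ j (Real.log x + s) / x) (𝓝[>] 0)
      (𝓝 (Complex.exp s)) := by
  have h := ((tendsto_logSolution_mul_exp_neg hα μ s j).comp
    Real.tendsto_log_nhdsGT_zero).mul_const (Complex.exp s)
  rw [one_mul] at h
  refine h.congr' ?_
  filter_upwards [self_mem_nhdsWithin] with x hx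
  have hx : 0 < x := hx
  simp only [Function.comp_apply]
  rw [neg_add, Complex.exp_add, mul_assoc, mul_assoc, ← Complex.exp_add, neg_add_cancel,
    Complex.exp_zero, mul_one, Complex.exp_neg, ← Complex.ofReal_exp, Real.exp_log hx,
    div_eq_mul_inv]

lemma tendsto_logSolution_ray (hα : 0 < α) (μ s : ℂ) (j : ℕ) :
    Tendsto (fun x : ℝ => logSolution α μ j (Real.log x + s)) (𝓝[>] 0) (𝓝 0) := by
  have h0 : Tendsto (fun x : ℝ => (x : ℂ)) (𝓝[>] 0) (𝓝 0) :=
    (Complex.continuous_ofReal.tendsto' 0 0 (by simp)).mono_left nhdsWithin_le_nhds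
  have h := (tendsto_logSolution_ray_div hα μ s j).mul h0
  rw [mul_zero] at h
  refine h.congr' ?_
  filter_upwards [self_mem_nhdsWithin] with x hx
  exact div_mul_cancel₀ _ (Complex.ofReal_ne_zero.2 (ne_of_gt hx))

/-- Square integrability of the solution along the ray through `exp s`. -/
def IsSquareIntegrableRay (α : ℝ) (μ s : ℂ) : Prop :=
  IntegrableOn (fun x : ℝ => ‖logSolution α μ 0 (Real.log x + s)‖ ^ 2) (Ioi 0)

lemma IsSquareIntegrableRay.isEigenvalue (hα : 0 < α) {μ s : ℂ}
    (h : IsSquareIntegrableRay α μ s) :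
    IsEigenvalue α (Complex.exp ((α + 2) * s)) (μ * Complex.exp (2 * s)) := by
  set Y : ℝ → ℂ := fun x => logSolution α μ 0 (Real.log x + s) with hY
  set y : ℝ → ℂ := (Ioi 0).indicator Y with hy
  have hyY : ∀ x, 0 < x → y x = Y x := fun x hx => indicator_of_mem (mem_Ioi.2 hx) Y
  have hy0 : y 0 = 0 := indicator_of_notMem (by simp) Y
  have hev : ∀ x, 0 < x → y =ᶠ[𝓝 x] Y := fun x hx => by
    filter_upwards [Ioi_mem_nhds hx] with t ht using hyY t ht
  have hder : ∀ x, 0 < x → HasDerivAt y (logSolution α μ 1 (Real.log x + s) / x) x := fun x hx =>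
    (hasDerivAt_logSolution_ray hα μ s 0 hx).congr_of_eventuallyEq (hev x hx)
  refine ⟨y, ?_, hy0, ?_, ⟨fun x => logSolution α μ 1 (Real.log x + s) / x, hder, ?_⟩, ?_⟩
  · intro x hx
    rcases (mem_Ici.1 hx).eq_or_lt with rfl | hx
    · rw [← Ioi_insert, continuousWithinAt_insert_self, ContinuousWithinAt, hy0]
      refine (tendsto_logSolution_ray hα μ s 0).congr' ?_
      filter_upwards [self_mem_nhdsWithin] with x hx using (hyY x hx).symm
    · exact (hder x hx).continuousAt.continuousWithinAt
  · by_contra! hzero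
    have h1 := tendsto_logSolution_ray_div hα μ s 0
    have h2 : Tendsto (fun x : ℝ => logSolution α μ 0 (Real.log x + s) / x) (𝓝[>] 0) (𝓝 0) := by
      refine tendsto_const_nhds.congr' ?_
      filter_upwards [self_mem_nhdsWithin] with x hx
      have hx : 0 < x := hx
      have h3 : logSolution α μ 0 (Real.log x + s) = 0 := by
        have := hzero x hx.le
        rwa [hyY x hx] at this
      rw [h3, zero_div]
    exact Complex.exp_ne_zero s (tendsto_nhds_unique h1 h2)
  · intro x hx
    rw [hyY x hx]
    exact hasDerivAt_logSolution_ray_deriv hα μ s hx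
  · refine IntegrableOn.congr_fun h (fun x hx => ?_) measurableSet_Ioi
    rw [hyY x hx]

lemma IsEigenvalue.isSquareIntegrableRay (hα : 0 < α) {μ s : ℂ}
    (h : IsEigenvalue α (Complex.exp ((α + 2) * s)) (μ * Complex.exp (2 * s))) :
    IsSquareIntegrableRay α μ s := by
  obtain ⟨y, hyc, hy0, ⟨x₀, hx₀, hne⟩, ⟨y', hy, hy'⟩, hL2⟩ := h
  set q : ℝ → ℂ := fun x =>
    Complex.exp ((α + 2) * s) * ((x ^ α : ℝ) : ℂ) - μ * Complex.exp (2 * s) with hq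
  have hqc : Continuous q := continuous_powerPotential hα _ _
  obtain ⟨d, hd⟩ := exists_tendsto_deriv_zero hqc hyc hy'
  have hlim0 : Tendsto y (𝓝[>] 0) (𝓝 0) := by
    have := (hyc 0 self_mem_Ici).mono_left (nhdsWithin_mono 0 Ioi_subset_Ici_self)
    rwa [hy0] at this
  set C := d / Complex.exp s with hC
  set Y : ℝ → ℂ := fun x => logSolution α μ 0 (Real.log x + s) with hY
  set Y' : ℝ → ℂ := fun x => logSolution α μ 1 (Real.log x + s) / x with hY'
  have hprop : ∀ x ∈ Ioi (0 : ℝ), y x - C * Y x = 0 := by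
    refine eq_zero_of_tendsto_zero (y := fun x => y x - C * Y x) (y' := fun x => y' x - C * Y' x)
      hqc (fun x hx => ?_) (fun x hx => ?_) ?_ ?_
    · exact (hy x hx).sub ((hasDerivAt_logSolution_ray hα μ s 0 hx).const_mul C)
    · convert! (hy' x hx).sub ((hasDerivAt_logSolution_ray_deriv hα μ s hx).const_mul C) using 1
      simp only [hq, hY]; ring
    · simpa using hlim0.sub ((tendsto_logSolution_ray hα μ s 0).const_mul C)
    · have h1 := hd.sub ((tendsto_logSolution_ray_div hα μ s 1).const_mul C)
      rwa [hC, div_mul_cancel₀ _ (Complex.exp_ne_zero s), sub_self] at h1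
  have hx₀pos : 0 < x₀ := lt_of_le_of_ne hx₀ fun h => hne (h ▸ hy0)
  have hC0 : C ≠ 0 := by
    intro h0
    have := hprop x₀ hx₀pos
    rw [h0, zero_mul, sub_zero] at this
    exact hne this
  have h1 : IntegrableOn (fun x => (‖C‖ ^ 2)⁻¹ * ‖y x‖ ^ 2) (Ioi 0) := Integrable.const_mul hL2 _
  refine h1.congr_fun (fun x hx => ?_) measurableSet_Ioi
  have h2 := sub_eq_zero.1 (hprop x hx)
  have h3 : ‖C‖ ≠ 0 := norm_ne_zero_iff.2 hC0
  simp only [h2, norm_mul, mul_pow]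
  field_simp
  rfl

lemma isEigenvalue_iff_isSquareIntegrableRay (hα : 0 < α) (μ s : ℂ) :
    IsEigenvalue α (Complex.exp ((α + 2) * s)) (μ * Complex.exp (2 * s)) ↔
      IsSquareIntegrableRay α μ s :=
  ⟨fun h => h.isSquareIntegrableRay hα, fun h => h.isEigenvalue hα⟩

/-- Square integrability depends only on the direction of the ray. -/
lemma isSquareIntegrableRay_iff_im (μ s : ℂ) :
    IsSquareIntegrableRay α μ s ↔ IsSquareIntegrableRay α μ (s.im * Complex.I) := by
  have h := integrableOn_Ioi_comp_mul_left_iff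
    (fun x : ℝ => ‖logSolution α μ 0 (Real.log x + s.im * Complex.I)‖ ^ 2) 0 (Real.exp_pos s.re)
  rw [mul_zero] at h
  rw [IsSquareIntegrableRay, IsSquareIntegrableRay, ← h]
  refine integrableOn_congr_fun (fun x hx => ?_) measurableSet_Ioi
  have hx : 0 < x := hx
  rw [Real.log_mul (Real.exp_pos _).ne' hx.ne', Real.log_exp]
  congr 3
  nth_rewrite 1 [← Complex.re_add_im s]
  push_cast; ring

/-- A Phragmén–Lindelöf estimate in a strip, for a function of double exponential growth that decays
on the real line. -/
lemma norm_le_of_exp_decay_of_exp_growth {f : ℂ → ℂ} (hf : Differentiable ℂ f) {ρ K ε C : ℝ}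
    (hρ : 0 < ρ) (hK : 0 ≤ K) (hε : 0 ≤ ε)
    (hgrow : ∀ ζ : ℂ, ‖f ζ‖ ≤ C * Real.exp (K * Real.exp (ρ * ζ.re)))
    (hdec : ∀ x : ℝ, ‖f x‖ ≤ C * Real.exp (-(ε * Real.exp (ρ * x)))) {ζ : ℂ}
    (h0 : 0 ≤ ζ.im) (h1 : ζ.im ≤ Real.pi / (2 * ρ)) :
    ‖f ζ‖ ≤ C * Real.exp
      (-((ε * Real.cos (ρ * ζ.im) - K * Real.sin (ρ * ζ.im)) * Real.exp (ρ * ζ.re))) := by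
  have hC : 0 ≤ C := by
    by_contra! h
    have := (norm_nonneg _).trans (hgrow 0)
    have := mul_neg_of_neg_of_pos h (Real.exp_pos (K * Real.exp (ρ * (0 : ℂ).re)))
    linarith
  set g : ℂ → ℂ := fun ζ => f ζ * Complex.exp ((ε + K * Complex.I) * Complex.exp (ρ * ζ)) with hg
  have hgd : Differentiable ℂ g := by fun_prop
  have hgn : ∀ ζ, ‖g ζ‖ = ‖f ζ‖ * Real.exp
      ((ε * Real.cos (ρ * ζ.im) - K * Real.sin (ρ * ζ.im)) * Real.exp (ρ * ζ.re)) := by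
    intro ζ
    simp only [hg]
    rw [norm_mul, Complex.norm_exp, Complex.mul_re, Complex.exp_re, Complex.exp_im,
      Complex.re_ofReal_mul, Complex.im_ofReal_mul]
    congr 2
    simp; ring
  have hbd : ‖g ζ‖ ≤ C := by
    refine PhragmenLindelof.horizontal_strip hgd.diffContOnCl ⟨ρ, ?_, 2 * K + ε, ?_⟩ ?_ ?_ h0 h1
    · rw [sub_zero, div_div_eq_mul_div, mul_div_cancel_left₀ _ Real.pi_pos.ne']
      linarith
    · refine Asymptotics.IsBigO.of_bound C (Eventually.of_forall fun ζ => ?_)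
      rw [hgn, Real.norm_of_nonneg (Real.exp_pos _).le]
      refine (mul_le_mul_of_nonneg_right (hgrow ζ) (Real.exp_pos _).le).trans ?_
      rw [mul_assoc, ← Real.exp_add]
      refine mul_le_mul_of_nonneg_left (Real.exp_le_exp.2 ?_) hC
      have e1 : Real.exp (ρ * ζ.re) ≤ Real.exp (ρ * |ζ.re|) :=
        Real.exp_le_exp.2 (mul_le_mul_of_nonneg_left (le_abs_self _) hρ.le)
      have e2 : ε * Real.cos (ρ * ζ.im) ≤ ε := mul_le_of_le_one_right hε (Real.cos_le_one _)
      have e3 : -(K * Real.sin (ρ * ζ.im)) ≤ K := by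
        have := mul_le_mul_of_nonneg_left (Real.neg_one_le_sin (ρ * ζ.im)) hK
        linarith
      calc _ = (K + (ε * Real.cos (ρ * ζ.im) - K * Real.sin (ρ * ζ.im))) *
              Real.exp (ρ * ζ.re) := by ring
        _ ≤ (2 * K + ε) * Real.exp (ρ * ζ.re) :=
          mul_le_mul_of_nonneg_right (by linarith) (Real.exp_pos _).le
        _ ≤ _ := by gcongr
    · intro z hz
      have hz' : z = (z.re : ℂ) := Complex.ext (by simp) (by simp [hz])
      have := hdec z.re
      rw [← hz'] at this
      rw [hgn, hz, mul_zero, Real.cos_zero, Real.sin_zero, mul_one, mul_zero, sub_zero]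
      refine (mul_le_mul_of_nonneg_right this (Real.exp_pos _).le).trans ?_
      rw [mul_assoc, ← Real.exp_add, neg_add_cancel, Real.exp_zero, mul_one]
    · intro z hz
      have e : ρ * (Real.pi / (2 * ρ)) = Real.pi / 2 := by field_simp
      rw [hgn, hz, e, Real.cos_pi_div_two, Real.sin_pi_div_two, mul_zero, mul_one, zero_sub]
      refine (mul_le_mul_of_nonneg_right (hgrow z) (Real.exp_pos _).le).trans ?_
      rw [mul_assoc, ← Real.exp_add, ← add_mul, add_neg_cancel, zero_mul, Real.exp_zero, mul_one]
  rw [hgn] at hbd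
  rw [Real.exp_neg, ← div_eq_mul_inv, le_div_iff₀ (Real.exp_pos _)]
  exact hbd

/-- The constant in the exponential growth bound for the solution. -/
noncomputable def growthRate (μ : ℂ) : ℝ := 3 + 2 * √‖μ‖

lemma growthRate_nonneg (μ : ℂ) : 0 ≤ growthRate μ := by unfold growthRate; positivity

lemma IsSquareIntegrableRay.exists_decay (hα : 0 < α) {μ : ℂ} {θ k : ℝ} (hk : 0 < k)
    (hθ : k ≤ Real.cos ((α + 2) / 2 * θ)) (h : IsSquareIntegrableRay α μ (θ * Complex.I)) :
    ∃ C, ∀ t : ℝ, ‖logSolution α μ 0 (t + θ * Complex.I)‖ ≤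
      C * Real.exp (-(k / (α + 2) * Real.exp ((α + 2) / 2 * t))) := by
  set φ := (α + 2) / 2 * θ with hφ
  set e : ℂ := Complex.exp ((-φ : ℝ) * Complex.I) with he
  have hec : e * Complex.exp ((α + 2) * (θ * Complex.I)) = Complex.exp ((φ : ℝ) * Complex.I) := by
    rw [he, ← Complex.exp_add]; congr 1; rw [hφ]; push_cast; ring
  obtain ⟨C, X, hX, hdec⟩ := exists_norm_sq_le_exp (e := e) hα hk
    (by rw [he, Complex.norm_exp_ofReal_mul_I])
    (by rw [he, Complex.exp_ofReal_mul_I_re, Real.cos_neg]; exact hθ)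
    (by rw [hec, Complex.exp_ofReal_mul_I_re]; exact hθ)
    (fun x hx => hasDerivAt_logSolution_ray hα μ (θ * Complex.I) 0 hx)
    (fun x hx => hasDerivAt_logSolution_ray_deriv hα μ (θ * Complex.I) hx) h
  set D := Real.exp (1 + 2 * √‖μ‖) * Real.exp (growthRate μ * Real.exp ((α + 2) / 2 * Real.log X))
    with hD
  set E := Real.exp (k / (α + 2) * Real.exp ((α + 2) / 2 * Real.log X)) with hE
  refine ⟨max (√C) (D * E), fun t => ?_⟩
  rcases le_total (Real.log X) t with ht | ht
  · have hXt : X ≤ Real.exp t := (Real.log_le_iff_le_exp hX).1 ht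
    have h1 := hdec (Real.exp t) hXt
    rw [Real.log_exp, ← Real.exp_mul] at h1
    refine le_trans ?_ (mul_le_mul_of_nonneg_right (le_max_left _ _) (Real.exp_pos _).le)
    have hexp : Real.exp (-(k / (α / 2 + 1) * Real.exp (t * (α / 2 + 1)))) =
        Real.exp (-(k / (α + 2) * Real.exp ((α + 2) / 2 * t))) ^ 2 := by
      rw [← Real.exp_nat_mul]
      congr 1
      rw [show t * (α / 2 + 1) = (α + 2) / 2 * t by ring]
      push_cast; field_simp
    rw [hexp] at h1
    have hC : 0 ≤ C := by
      by_contra! hC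
      have := (sq_nonneg _).trans h1
      have h3 := mul_neg_of_neg_of_pos hC (pow_pos
        (Real.exp_pos (-(k / (α + 2) * Real.exp ((α + 2) / 2 * t)))) 2)
      linarith
    refine le_of_sq_le_sq ?_ (by positivity)
    rwa [mul_pow, Real.sq_sqrt hC]
  · have hmono : Real.exp ((α + 2) / 2 * t) ≤ Real.exp ((α + 2) / 2 * Real.log X) :=
      Real.exp_le_exp.2 (mul_le_mul_of_nonneg_left ht (by positivity))
    refine le_trans ?_ (mul_le_mul_of_nonneg_right (le_max_right _ _) (Real.exp_pos _).le)
    have h1 := norm_logSolution_zero_le hα μ (t + θ * Complex.I)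
    have hre : ((t : ℂ) + θ * Complex.I).re = t := by simp
    rw [hre] at h1
    have hK := growthRate_nonneg μ
    have h2 : ‖logSolution α μ 0 (t + θ * Complex.I)‖ ≤ D := by
      refine h1.trans (mul_le_mul_of_nonneg_left (Real.exp_le_exp.2 ?_) (Real.exp_pos _).le)
      exact mul_le_mul_of_nonneg_left hmono hK
    have h3 : 1 ≤ E * Real.exp (-(k / (α + 2) * Real.exp ((α + 2) / 2 * t))) := by
      rw [hE, ← Real.exp_add]
      refine Real.one_le_exp ?_
      have : k / (α + 2) * Real.exp ((α + 2) / 2 * t) ≤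
          k / (α + 2) * Real.exp ((α + 2) / 2 * Real.log X) := by gcongr
      linarith
    rw [mul_assoc]
    exact h2.trans (le_mul_of_one_le_right (by positivity) h3)

lemma isSquareIntegrableRay_of_decay (hα : 0 < α) {μ s : ℂ} {ε C : ℝ} (hε : 0 < ε)
    (h : ∀ t : ℝ, ‖logSolution α μ 0 (t + s)‖ ≤
      C * Real.exp (-(ε * Real.exp ((α + 2) / 2 * t)))) : IsSquareIntegrableRay α μ s := by
  have h1 := (integrableOn_rpow_mul_exp_neg_mul_rpow (p := (α + 2) / 2) (s := 0) (b := 2 * ε)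
    (by norm_num) (by positivity) (by positivity)).const_mul (C ^ 2)
  refine Integrable.mono' h1 ?_ ?_
  · refine ContinuousOn.aestronglyMeasurable (fun x hx => ?_) measurableSet_Ioi
    exact ((hasDerivAt_logSolution_ray hα μ s 0 hx).continuousAt.norm.pow 2).continuousWithinAt
  · refine (ae_restrict_iff' measurableSet_Ioi).2 (ae_of_all _ fun x hx => ?_)
    have hx : 0 < x := hx
    rw [Real.norm_of_nonneg (sq_nonneg _), Real.rpow_zero, one_mul]
    refine (pow_le_pow_left₀ (norm_nonneg _) (h (Real.log x)) 2).trans (le_of_eq ?_)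
    rw [mul_pow, ← Real.exp_nat_mul, Real.rpow_def_of_pos hx, mul_comm (Real.log x)]
    congr 2
    push_cast; ring

/-- Square integrability propagates to nearby directions, by a uniform amount. -/
lemma exists_isSquareIntegrableRay_of_abs_sub_le (hα : 0 < α) (μ : ℂ) {k : ℝ} (hk : 0 < k) :
    ∃ δ > 0, ∀ θ₀ θ : ℝ, k ≤ Real.cos ((α + 2) / 2 * θ₀) → |θ - θ₀| ≤ δ →
      IsSquareIntegrableRay α μ (θ₀ * Complex.I) →
        IsSquareIntegrableRay α μ (θ * Complex.I) := by
  set ρ := (α + 2) / 2 with hρ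
  have hρ0 : 0 < ρ := by positivity
  set ε := k / (α + 2) with hε
  have hε0 : 0 < ε := by positivity
  set K := growthRate μ with hK
  have hK0 : 0 ≤ K := growthRate_nonneg μ
  obtain ⟨δ, hδ, hδπ, hpos⟩ : ∃ δ > 0, δ ≤ Real.pi / (2 * ρ) ∧
      ∀ t, |t| ≤ δ → 0 < ε * Real.cos (ρ * t) - K * Real.sin (ρ * t) := by
    have hc : Tendsto (fun t => ε * Real.cos (ρ * t) - K * Real.sin (ρ * t)) (𝓝 0) (𝓝 ε) :=
      Continuous.tendsto' (by fun_prop) 0 ε (by simp)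
    obtain ⟨r, hr, hball⟩ := Metric.eventually_nhds_iff.1 (hc.eventually_const_lt hε0)
    refine ⟨min (r / 2) (Real.pi / (2 * ρ)), by positivity, min_le_right _ _, fun t ht => hball ?_⟩
    rw [Real.dist_eq, sub_zero]
    have := min_le_left (r / 2) (Real.pi / (2 * ρ))
    linarith
  refine ⟨δ, hδ, fun θ₀ θ hθ₀ hθ h => ?_⟩
  obtain ⟨C₁, hC₁⟩ := h.exists_decay hα hk hθ₀
  set C := max C₁ (Real.exp (1 + 2 * √‖μ‖)) with hC
  have hdec : ∀ t : ℝ, ‖logSolution α μ 0 (t + θ₀ * Complex.I)‖ ≤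
      C * Real.exp (-(ε * Real.exp (ρ * t))) := fun t =>
    (hC₁ t).trans (mul_le_mul_of_nonneg_right (le_max_left _ _) (Real.exp_pos _).le)
  have hgrow : ∀ ζ : ℂ, ‖logSolution α μ 0 (ζ + θ₀ * Complex.I)‖ ≤
      C * Real.exp (K * Real.exp (ρ * ζ.re)) := fun ζ => by
    have h1 := norm_logSolution_zero_le hα μ (ζ + θ₀ * Complex.I)
    have hre : (ζ + θ₀ * Complex.I).re = ζ.re := by simp
    rw [hre] at h1
    exact h1.trans (mul_le_mul_of_nonneg_right (le_max_right _ _) (Real.exp_pos _).le)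
  have hf : Differentiable ℂ fun ζ => logSolution α μ 0 (ζ + θ₀ * Complex.I) := fun ζ =>
    ((hasDerivAt_logSolution hα μ 0 _).comp_add_const ζ (θ₀ * Complex.I)).differentiableAt
  refine isSquareIntegrableRay_of_decay (C := C) hα (hpos |θ - θ₀| (by rwa [abs_abs])) fun t => ?_
  rcases le_total θ₀ θ with hle | hle
  · have habs : |θ - θ₀| = θ - θ₀ := abs_of_nonneg (sub_nonneg.2 hle)
    have h1 := norm_le_of_exp_decay_of_exp_growth hf hρ0 hK0 hε0.le hgrow hdec
      (ζ := ⟨t, θ - θ₀⟩) (sub_nonneg.2 hle) ((habs ▸ hθ).trans hδπ)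
    rw [habs]
    convert h1 using 3
    apply Complex.ext <;> simp
  · have habs : |θ - θ₀| = θ₀ - θ := by rw [abs_sub_comm, abs_of_nonneg (sub_nonneg.2 hle)]
    set g : ℂ → ℂ := fun ζ =>
      starRingEnd ℂ (logSolution α μ 0 (starRingEnd ℂ ζ + θ₀ * Complex.I)) with hg
    have hgd : Differentiable ℂ g := fun ζ => by
      have := (hf (starRingEnd ℂ ζ)).conj_conj
      rwa [Complex.conj_conj] at this
    have h1 := norm_le_of_exp_decay_of_exp_growth hgd hρ0 hK0 hε0.le (C := C)
      (fun ζ => by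
        simp only [hg, RCLike.norm_conj]
        exact (hgrow _).trans_eq (by rw [Complex.conj_re]))
      (fun x => by
        simp only [hg, RCLike.norm_conj, Complex.conj_ofReal]
        exact hdec x)
      (ζ := ⟨t, θ₀ - θ⟩) (sub_nonneg.2 hle) ((habs ▸ hθ).trans hδπ)
    simp only [hg, RCLike.norm_conj] at h1
    have e : (t : ℂ) + θ * Complex.I = starRingEnd ℂ ⟨t, θ₀ - θ⟩ + θ₀ * Complex.I := by
      apply Complex.ext <;> simp
    rw [habs, e]
    exact h1

/-- Within the sector of subdominance, square integrability does not depend on the direction. -/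
lemma isSquareIntegrableRay_iff_zero (hα : 0 < α) (μ : ℂ) {θ : ℝ} (hθ : (α + 2) * |θ| < Real.pi) :
    IsSquareIntegrableRay α μ (θ * Complex.I) ↔ IsSquareIntegrableRay α μ 0 := by
  have hk : 0 < Real.cos ((α + 2) / 2 * |θ|) := Real.cos_pos_of_mem_Ioo
    ⟨by have := Real.pi_pos; have : 0 ≤ (α + 2) / 2 * |θ| := by positivity
        linarith, by linarith⟩
  obtain ⟨δ, hδ, hstep⟩ := exists_isSquareIntegrableRay_of_abs_sub_le hα μ hk
  have hcos : ∀ t : ℝ, |t| ≤ |θ| →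
      Real.cos ((α + 2) / 2 * |θ|) ≤ Real.cos ((α + 2) / 2 * t) := by
    intro t ht
    rw [← Real.cos_abs ((α + 2) / 2 * t), abs_mul, abs_of_pos (by positivity : 0 < (α + 2) / 2)]
    refine Real.cos_le_cos_of_nonneg_of_le_pi (by positivity) ?_ (by gcongr)
    have : 0 ≤ (α + 2) / 2 * |θ| := by positivity
    linarith
  have hchain : ∀ (n : ℕ) (a b : ℝ), |a| ≤ |θ| → |b| ≤ |θ| → |b - a| ≤ n * δ →
      IsSquareIntegrableRay α μ (a * Complex.I) → IsSquareIntegrableRay α μ (b * Complex.I) := by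
    intro n
    induction n with
    | zero =>
      intro a b _ _ hab h
      have : b = a := by
        rw [Nat.cast_zero, zero_mul] at hab
        exact sub_eq_zero.1 (abs_nonpos_iff.1 hab)
      rwa [this]
    | succ n ih =>
      intro a b ha hb hab h
      have hn : (0 : ℝ) < n + 1 := by positivity
      rw [Nat.cast_add, Nat.cast_one] at hab
      set m := a + (b - a) / (n + 1) with hm
      have h1 : |m - a| ≤ δ := by
        rw [hm, add_sub_cancel_left, abs_div, abs_of_pos hn, div_le_iff₀' hn]
        exact hab
      have h2 : |b - m| ≤ n * δ := by
        have e : b - m = n * ((b - a) / (n + 1)) := by rw [hm]; field_simp; ring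
        rw [e, abs_mul, Nat.abs_cast]
        refine mul_le_mul_of_nonneg_left ?_ (by positivity)
        rwa [hm, add_sub_cancel_left] at h1
      have h3 : |m| ≤ |θ| := by
        have e : m = (n / (n + 1)) * a + (1 / (n + 1)) * b := by rw [hm]; field_simp; ring
        have := convex_Icc (-|θ|) |θ| (abs_le.1 ha) (abs_le.1 hb)
          (by positivity : (0 : ℝ) ≤ n / (n + 1)) (by positivity : (0 : ℝ) ≤ 1 / (n + 1))
          (by field_simp)
        rw [smul_eq_mul, smul_eq_mul, ← e] at this
        exact abs_le.2 this
      exact ih m b h3 hb h2 (hstep a m (hcos a ha) h1 h)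
  obtain ⟨n, hn⟩ := exists_nat_ge (|θ| / δ)
  rw [div_le_iff₀ hδ] at hn
  have h0 : ((0 : ℝ) : ℂ) * Complex.I = 0 := by simp
  rw [← h0]
  exact ⟨hchain n θ 0 le_rfl (by simp) (by simpa using hn),
    hchain n 0 θ (by simp) le_rfl (by simpa using hn)⟩

end Rays

/-- `λ` is an eigenvalue of `𝓛_{c,α}` iff `c^{−2/(α+2)}·λ` is an eigenvalue
of `𝓛_{1,α}` (principal branch power); every eigenvalue of `𝓛_{1,α}` is a positive real;
consequently every eigenvalue of `𝓛_{c,α}` has the form `c^{2/(α+2)}·τ` with `τ > 0`. -/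
theorem stmt4 (α : ℝ) (hα : 0 < α) (c : ℂ) (hc : c ≠ 0) (harg : |c.arg| < Real.pi) :
    (∀ lam : ℂ,
      IsEigenvalue α c lam ↔ IsEigenvalue α 1 (c ^ (-(2 : ℂ) / ((α : ℂ) + 2)) * lam)) ∧
    (∀ τ : ℂ, IsEigenvalue α 1 τ → ∃ r : ℝ, 0 < r ∧ τ = (r : ℂ)) ∧
    (∀ lam : ℂ, IsEigenvalue α c lam →
      ∃ τ : ℝ, 0 < τ ∧ lam = c ^ ((2 : ℂ) / ((α : ℂ) + 2)) * (τ : ℂ)) := by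
  have hα2 : (α : ℂ) + 2 ≠ 0 := by
    have : (0 : ℝ) < α + 2 := by positivity
    exact_mod_cast this.ne'
  have hscale : ∀ lam : ℂ,
      IsEigenvalue α c lam ↔ IsEigenvalue α 1 (c ^ (-(2 : ℂ) / ((α : ℂ) + 2)) * lam) := by
    intro lam
    set μ := c ^ (-(2 : ℂ) / ((α : ℂ) + 2)) * lam with hμ
    set s : ℂ := Complex.log c / (α + 2) with hs
    have hcs : Complex.exp ((α + 2) * s) = c := by
      rw [hs, mul_div_cancel₀ _ hα2, Complex.exp_log hc]
    have hlam : μ * Complex.exp (2 * s) = lam := by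
      rw [hμ, Complex.cpow_def_of_ne_zero hc, mul_right_comm, ← Complex.exp_add]
      have : Complex.log c * (-2 / ((α : ℂ) + 2)) + 2 * s = 0 := by rw [hs]; ring
      rw [this, Complex.exp_zero, one_mul]
    have him : s.im = c.arg / (α + 2) := by
      have : s = Complex.log c / ((α + 2 : ℝ) : ℂ) := by rw [hs]; push_cast; rfl
      rw [this, Complex.div_ofReal_im, Complex.log_im]
    have hsector : (α + 2) * |s.im| < Real.pi := by
      rw [him, abs_div, abs_of_pos (by positivity : 0 < α + 2), mul_div_cancel₀ _ (by positivity)]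
      exact harg
    have h1 := isEigenvalue_iff_isSquareIntegrableRay hα μ s
    have h2 := isEigenvalue_iff_isSquareIntegrableRay hα μ 0
    rw [hcs, hlam] at h1
    rw [mul_zero, mul_zero, Complex.exp_zero, mul_one] at h2
    rw [h1, h2, isSquareIntegrableRay_iff_im, isSquareIntegrableRay_iff_zero hα μ hsector]
  refine ⟨hscale, fun τ hτ => hτ.pos_of_one hα, fun lam hlam => ?_⟩
  obtain ⟨r, hr, hre⟩ := ((hscale lam).1 hlam).pos_of_one hα
  refine ⟨r, hr, ?_⟩
  rw [← hre, ← mul_assoc, ← Complex.cpow_add _ _ hc, ← add_div, add_neg_cancel, zero_div,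
    Complex.cpow_zero, one_mul]
end

section
/- Under the stated parameter constraints: Re g(t) > 0 for all t ∈ [0, Z₀), Re g(Z₀) = 0, and Re g(t) < 0 for all t > Z₀. Consequently t ↦ Re S(t) is strictly increasing on [0, Z₀], strictly decreasing on [Z₀, ∞), and attains its unique global maximum over [0,∞) at t = Z₀. -/
open MeasureTheory Set

/-- The hypotheses on `θ`, `δ`, `φ` force `0 < φ`. -/
theorem phase_pos {α θ δ φ : ℝ} (hα0 : 0 < α) (hθ1 : t0 α ≤ θ)
    (hδ2 : δ < (Real.pi * min 1 α - θ) / 2) (hφ1 : t0 α - δ < φ) : 0 < φ := by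
  have hπ := Real.pi_pos
  have h : Real.pi * min 1 α ≤ 3 * t0 α := by
    have h1 : min 1 α ≤ 6 * α / (α + 2) := by
      rw [le_div_iff₀ (by positivity)]
      rcases le_total 1 α with h | h
      · rw [min_eq_left h]; linarith
      · rw [min_eq_right h]; nlinarith
    calc Real.pi * min 1 α ≤ Real.pi * (6 * α / (α + 2)) := by gcongr
      _ = 3 * t0 α := by unfold t0; ring
  linarith

/-- A continuous real function without zeros on `[0, ∞)` that is negative at `0` is negative. -/
theorem ContinuousOn.neg_of_ne_zero_Ici {f : ℝ → ℝ} (hf : ContinuousOn f (Ici 0))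
    (hne : ∀ t, 0 ≤ t → f t ≠ 0) (h0 : f 0 < 0) {t : ℝ} (ht : 0 ≤ t) : f t < 0 := by
  by_contra! h
  obtain ⟨x, hx, hfx⟩ :=
    intermediate_value_Icc ht (hf.mono Icc_subset_Ici_self) ⟨h0.le, h⟩
  exact hne x hx.1 hfx

/-- The real part of the increment of `∫₀ g` is the integral of `Re g`. -/
theorem re_integral_sub {g : ℝ → ℂ} (hg : ContinuousOn g (Ici 0)) {a b : ℝ}
    (ha : 0 ≤ a) (hb : 0 ≤ b) :
    (∫ s in (0 : ℝ)..b, g s).re - (∫ s in (0 : ℝ)..a, g s).re = ∫ s in a..b, (g s).re := by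
  have hi : ∀ {x y : ℝ}, 0 ≤ x → 0 ≤ y → IntervalIntegrable g volume x y := fun hx hy =>
    (hg.mono fun _ hz => (le_min hx hy).trans hz.1).intervalIntegrable
  rw [← Complex.sub_re, intervalIntegral.integral_interval_sub_left (hi le_rfl hb) (hi le_rfl ha)]
  exact (Complex.reCLM.intervalIntegral_comp_comm (hi ha hb)).symm

/-- with `c = e^{iθ}`, `μ = e^{iφ}`, `q(t) = c t^α − μ`,
`Z₀ = (sin φ / sin θ)^{1/α}`, `g` the continuous branch of `√q` on `[0,∞)` with
`g(0) = −i e^{iφ/2}` and `S(t) = ∫₀^t g`: `Re g > 0` on `[0, Z₀)`, `Re g(Z₀) = 0`,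
`Re g < 0` on `(Z₀,∞)`; hence `Re S` strictly increases on `[0,Z₀]`, strictly decreases
on `[Z₀,∞)`, and has its unique global maximum over `[0,∞)` at `Z₀`. -/
theorem stmt8 (α θ δ φ : ℝ) (hα0 : 0 < α) (hα2 : α < 2)
    (hθ1 : t0 α ≤ θ) (hθ2 : θ < min Real.pi (Real.pi * α))
    (hδ1 : 0 < δ) (hδ2 : δ < (Real.pi * min 1 α - θ) / 2)
    (hφ1 : t0 α - δ < φ) (hφ2 : φ < t0 α)
    (Z₀ : ℝ) (hZ₀ : Z₀ = (Real.sin φ / Real.sin θ) ^ (1 / α))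
    (g : ℝ → ℂ) (hgcont : ContinuousOn g (Set.Ici 0))
    (hgsq : ∀ t : ℝ, 0 ≤ t →
      g t ^ 2 = Complex.exp (Complex.I * (θ : ℂ)) * ((t ^ α : ℝ) : ℂ)
        - Complex.exp (Complex.I * (φ : ℂ)))
    (hg0 : g 0 = -Complex.I * Complex.exp (Complex.I * ((φ / 2 : ℝ) : ℂ)))
    (S : ℝ → ℂ) (hS : ∀ t : ℝ, S t = ∫ s in (0 : ℝ)..t, g s) :
    (∀ t ∈ Set.Ico (0 : ℝ) Z₀, 0 < (g t).re) ∧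
    (g Z₀).re = 0 ∧
    (∀ t : ℝ, Z₀ < t → (g t).re < 0) ∧
    StrictMonoOn (fun t => (S t).re) (Set.Icc 0 Z₀) ∧
    StrictAntiOn (fun t => (S t).re) (Set.Ici Z₀) ∧
    (∀ t : ℝ, 0 ≤ t → t ≠ Z₀ → (S t).re < (S Z₀).re) := by
  have hφ0 : 0 < φ := phase_pos hα0 hθ1 hδ2 hφ1
  have hφθ : φ < θ := hφ2.trans_le hθ1
  have hθπ : θ < Real.pi := hθ2.trans_le (min_le_left _ _)
  have hsφ : 0 < Real.sin φ := Real.sin_pos_of_pos_of_lt_pi hφ0 (hφθ.trans hθπ)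
  have hsθ : 0 < Real.sin θ := Real.sin_pos_of_pos_of_lt_pi (hφ0.trans hφθ) hθπ
  have hZpos : 0 < Z₀ := hZ₀ ▸ Real.rpow_pos_of_pos (div_pos hsφ hsθ) _
  have hZpow : Real.sin θ * Z₀ ^ α = Real.sin φ := by
    rw [hZ₀, ← Real.rpow_mul (div_pos hsφ hsθ).le, one_div_mul_cancel hα0.ne', Real.rpow_one]
    field_simp
  have him : ∀ t, 0 ≤ t →
      2 * (g t).re * (g t).im = Real.sin θ * t ^ α - Real.sin φ := fun t ht => by
    have h := congrArg Complex.im (hgsq t ht)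
    rw [mul_comm Complex.I, mul_comm Complex.I, Complex.sub_im, Complex.im_mul_ofReal,
      Complex.exp_ofReal_mul_I_im, Complex.exp_ofReal_mul_I_im, sq, Complex.mul_im] at h
    linarith
  have hre : ∀ t, 0 ≤ t →
      (g t).re ^ 2 - (g t).im ^ 2 = Real.cos θ * t ^ α - Real.cos φ := fun t ht => by
    have h := congrArg Complex.re (hgsq t ht)
    rw [mul_comm Complex.I, mul_comm Complex.I, Complex.sub_re, Complex.re_mul_ofReal,
      Complex.exp_ofReal_mul_I_re, Complex.exp_ofReal_mul_I_re, sq, Complex.mul_re] at h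
    linarith
  have hcross : Real.cos θ * Real.sin φ < Real.sin θ * Real.cos φ := by
    have h := Real.sin_pos_of_pos_of_lt_pi (x := θ - φ) (by linarith) (by linarith)
    rw [Real.sin_sub] at h
    linarith
  have hne : ∀ t, 0 ≤ t → (g t).im ≠ 0 := fun t ht h => by
    have h1 := him t ht
    have h2 := hre t ht
    rw [h] at h1 h2
    have h3 : Real.sin θ * (g t).re ^ 2 =
        Real.cos θ * Real.sin φ - Real.sin θ * Real.cos φ := by
      linear_combination Real.sin θ * h2 - Real.cos θ * h1
    linarith [mul_nonneg hsθ.le (sq_nonneg (g t).re)]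
  have hg0im : (g 0).im < 0 := by
    have hcos : 0 < Real.cos (φ / 2) :=
      Real.cos_pos_of_mem_Ioo ⟨by linarith, by linarith⟩
    rw [hg0, mul_comm Complex.I ((φ / 2 : ℝ) : ℂ), Complex.mul_im, Complex.exp_ofReal_mul_I_re]
    simpa using hcos
  have hneg : ∀ t, 0 ≤ t → (g t).im < 0 := fun t ht =>
    (Complex.continuous_im.comp_continuousOn hgcont).neg_of_ne_zero_Ici hne hg0im ht
  have hpos : ∀ t ∈ Ico (0 : ℝ) Z₀, 0 < (g t).re := fun t ht => by
    have h1 := him t ht.1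
    have h2 := mul_lt_mul_of_pos_left (Real.rpow_lt_rpow ht.1 ht.2 hα0) hsθ
    nlinarith [hneg t ht.1]
  have hlt : ∀ t : ℝ, Z₀ < t → (g t).re < 0 := fun t ht => by
    have h1 := him t (hZpos.trans ht).le
    have h2 := mul_lt_mul_of_pos_left (Real.rpow_lt_rpow hZpos.le ht hα0) hsθ
    nlinarith [hneg t (hZpos.trans ht).le]
  have hcre : ContinuousOn (fun t => (g t).re) (Ici 0) :=
    Complex.continuous_re.comp_continuousOn hgcont
  have hint : ∀ {a b : ℝ}, 0 ≤ a → a ≤ b →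
      IntervalIntegrable (fun t => (g t).re) volume a b := fun ha hab =>
    (hcre.mono fun _ hz => (le_min ha (ha.trans hab)).trans hz.1).intervalIntegrable
  have hmono : StrictMonoOn (fun t => (S t).re) (Icc 0 Z₀) := fun a ha b hb hab => by
    have h := intervalIntegral.intervalIntegral_pos_of_pos_on (hint ha.1 hab.le)
      (fun x hx => hpos x ⟨ha.1.trans hx.1.le, hx.2.trans_le hb.2⟩) hab
    rw [← re_integral_sub hgcont ha.1 hb.1, ← hS, ← hS] at h
    exact sub_pos.1 h
  have hanti : StrictAntiOn (fun t => (S t).re) (Ici Z₀) := fun a ha b hb hab => by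
    have ha0 : 0 ≤ a := hZpos.le.trans ha
    have h := intervalIntegral.intervalIntegral_pos_of_pos_on (hint ha0 hab.le).neg
      (fun x hx => neg_pos.2 (hlt x (lt_of_le_of_lt ha hx.1))) hab
    simp only [Pi.neg_apply, intervalIntegral.integral_neg] at h
    rw [← re_integral_sub hgcont ha0 (ha0.trans hab.le), ← hS, ← hS] at h
    exact sub_neg.1 (neg_pos.1 h)
  refine ⟨hpos, ?_, hlt, hmono, hanti, fun t ht htZ => ?_⟩
  · have h := him Z₀ hZpos.le
    rw [hZpow, sub_self] at h
    simpa [hne Z₀ hZpos.le] using h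
  · rcases htZ.lt_or_gt with h | h
    · exact hmono ⟨ht, h.le⟩ ⟨hZpos.le, le_rfl⟩ h
    · exact hanti self_mem_Ici h.le h
end

section
/- Under the stated parameter constraints, Im g(t) < 0 for every t ≥ 0; consequently t ↦ Im S(t) is strictly decreasing on [0,∞). -/
open MeasureTheory Set

/-- A point `r e^{iθ} - e^{iφ}` with `0 < θ < π` and `θ - π < φ < θ` is not a nonnegative real, so
its square roots are not real. -/
theorem im_ne_zero_of_sq_eq_exp_mul_sub_exp {θ φ r : ℝ} {w : ℂ} (hθ0 : 0 < θ)
    (hθπ : θ < Real.pi) (hφθ : φ < θ) (hθφ : θ - φ < Real.pi)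
    (hw : w ^ 2 = Complex.exp (Complex.I * (θ : ℂ)) * (r : ℂ) - Complex.exp (Complex.I * (φ : ℂ))) :
    w.im ≠ 0 := by
  intro him
  have hre := congrArg Complex.re hw
  have him2 := congrArg Complex.im hw
  simp [pow_two, Complex.exp_re, Complex.exp_im, him] at hre him2
  have hsin : 0 < Real.sin θ := Real.sin_pos_of_pos_of_lt_pi hθ0 hθπ
  have hsub : 0 < Real.sin (θ - φ) := Real.sin_pos_of_pos_of_lt_pi (by linarith) hθφ
  rw [Real.sin_sub] at hsub
  have hnonneg := mul_nonneg (mul_self_nonneg w.re) hsin.le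
  rw [hre] at hnonneg
  have hprod : Real.cos θ * (Real.sin θ * r - Real.sin φ) = 0 := by rw [← him2, mul_zero]
  linarith

/-- A continuous function on `[0,∞)` with negative value at `0` and no zeros stays negative. -/
theorem neg_of_continuousOn_Ici_of_ne_zero {f : ℝ → ℝ} (hf : ContinuousOn f (Set.Ici 0))
    (h0 : f 0 < 0) (hne : ∀ t, 0 ≤ t → f t ≠ 0) {t : ℝ} (ht : 0 ≤ t) : f t < 0 := by
  by_contra! h
  obtain ⟨s, hs, hs0⟩ := intermediate_value_Icc ht (hf.mono Set.Icc_subset_Ici_self) ⟨h0.le, h⟩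
  exact hne s hs.1 hs0

/-- The primitive of a continuous function on `[0,∞)` with negative imaginary part has strictly
decreasing imaginary part. -/
theorem strictAntiOn_im_intervalIntegral {g : ℝ → ℂ} (hg : ContinuousOn g (Set.Ici 0))
    (hneg : ∀ t, 0 ≤ t → (g t).im < 0) :
    StrictAntiOn (fun t => (∫ s in (0 : ℝ)..t, g s).im) (Set.Ici 0) := by
  intro a ha b hb hab
  rw [Set.mem_Ici] at ha hb
  have hint : ∀ {x y : ℝ}, 0 ≤ x → 0 ≤ y → IntervalIntegrable g volume x y := fun hx hy =>
    (hg.mono fun z hz => (le_min hx hy).trans hz.1).intervalIntegrable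
  have hadd := intervalIntegral.integral_add_adjacent_intervals
    (hint le_rfl ha) (hint ha hb)
  have him : (∫ s in a..b, g s).im = ∫ s in a..b, (g s).im :=
    (Complex.imCLM.intervalIntegral_comp_comm (hint ha hb)).symm
  have hpos : 0 < ∫ s in a..b, -(g s).im := by
    refine intervalIntegral.intervalIntegral_pos_of_pos_on ?_ (fun x hx => ?_) hab
    · exact ((Complex.continuous_im.comp_continuousOn hg).neg.mono
        fun z hz => (le_min ha hb).trans hz.1).intervalIntegrable
    · exact neg_pos.2 (hneg x (ha.trans hx.1.le))
  rw [intervalIntegral.integral_neg] at hpos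
  have h := congrArg Complex.im hadd
  rw [Complex.add_im, him] at h
  show (∫ s in (0 : ℝ)..b, g s).im < (∫ s in (0 : ℝ)..a, g s).im
  linarith

/-- with `c = e^{iθ}`, `μ = e^{iφ}`, `q(t) = c t^α − μ`, `g` the continuous
branch of `√q` on `[0,∞)` with `g(0) = −i e^{iφ/2}` and `S(t) = ∫₀^t g`:
`Im g(t) < 0` for all `t ≥ 0`, hence `t ↦ Im S(t)` is strictly decreasing on `[0,∞)`. -/
theorem stmt9 (α θ δ φ : ℝ) (hα0 : 0 < α) (hα2 : α < 2)
    (hθ1 : t0 α ≤ θ) (hθ2 : θ < min Real.pi (Real.pi * α))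
    (hδ1 : 0 < δ) (hδ2 : δ < (Real.pi * min 1 α - θ) / 2)
    (hφ1 : t0 α - δ < φ) (hφ2 : φ < t0 α)
    (g : ℝ → ℂ) (hgcont : ContinuousOn g (Set.Ici 0))
    (hgsq : ∀ t : ℝ, 0 ≤ t →
      g t ^ 2 = Complex.exp (Complex.I * (θ : ℂ)) * ((t ^ α : ℝ) : ℂ)
        - Complex.exp (Complex.I * (φ : ℂ)))
    (hg0 : g 0 = -Complex.I * Complex.exp (Complex.I * ((φ / 2 : ℝ) : ℂ)))
    (S : ℝ → ℂ) (hS : ∀ t : ℝ, S t = ∫ s in (0 : ℝ)..t, g s) :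
    (∀ t : ℝ, 0 ≤ t → (g t).im < 0) ∧
    StrictAntiOn (fun t => (S t).im) (Set.Ici 0) := by
  have ht0 : 0 < t0 α := by
    unfold t0
    positivity
  have hθπ : θ < Real.pi := hθ2.trans_le (min_le_left _ _)
  have hmin : Real.pi * min 1 α ≤ Real.pi :=
    mul_le_of_le_one_right Real.pi_pos.le (min_le_left _ _)
  have hg0im : (g 0).im < 0 := by
    have hcos : 0 < Real.cos (φ / 2) :=
      Real.cos_pos_of_mem_Ioo ⟨by linarith, by linarith⟩
    rw [hg0]
    generalize φ / 2 = x at hcos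
    simpa [Complex.exp_re] using hcos
  have hneg : ∀ t : ℝ, 0 ≤ t → (g t).im < 0 := fun t ht =>
    neg_of_continuousOn_Ici_of_ne_zero (Complex.continuous_im.comp_continuousOn hgcont) hg0im
      (fun s hs => im_ne_zero_of_sq_eq_exp_mul_sub_exp (by linarith) hθπ (by linarith)
        (by linarith) (hgsq s hs)) ht
  obtain rfl : S = fun t => ∫ s in (0 : ℝ)..t, g s := funext hS
  exact ⟨hneg, strictAntiOn_im_intervalIntegral hgcont hneg⟩
end

section
/- Under the stated parameter constraints, Re S(t)/t^{1+α/2} → −2·cos(θ/2)/(α+2) as t → +∞; in particular, since 0 < θ < π, Re S(t) → −∞ as t → +∞. -/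
open MeasureTheory Set Filter

/-- A continuous function on `[0, ∞)` whose square stays off the real axis keeps the sign of its
real part. -/
lemma re_neg_of_sq_im_ne_zero {h : ℝ → ℂ} (hcont : ContinuousOn h (Ici 0))
    (him : ∀ t, 0 ≤ t → (h t ^ 2).im ≠ 0) (h0 : (h 0).re < 0) {t : ℝ} (ht : 0 ≤ t) :
    (h t).re < 0 := by
  by_contra! hlt
  have hc : ContinuousOn (fun s => (h s).re) (Icc 0 t) :=
    Complex.continuous_re.comp_continuousOn (hcont.mono Icc_subset_Ici_self)
  obtain ⟨s, hs, hs0⟩ := intermediate_value_Icc ht hc ⟨h0.le, hlt⟩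
  apply him s hs.1
  have hre : (h s).re = 0 := hs0
  simp [sq, Complex.mul_im, hre]

/-- If `h² - T²` is unimodular, `T > 0` and `Re h ≤ 0`, then `h` is within `1/T` of `-T`. -/
lemma norm_add_le_inv_of_sq_sub_sq {h : ℂ} {T : ℝ} (hT : 0 < T) (hre : h.re ≤ 0)
    (hu : ‖h ^ 2 - (T : ℂ) ^ 2‖ = 1) : ‖h + T‖ ≤ T⁻¹ := by
  have hle : T ≤ ‖h - T‖ := by
    have h1 := Complex.abs_re_le_norm (h - T)
    have h2 := neg_le_abs (h - T).re
    simp only [Complex.sub_re, Complex.ofReal_re] at h1 h2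
    linarith
  have hprod : ‖h + T‖ * ‖h - T‖ = 1 := by
    rw [← norm_mul, ← hu]
    congr 1
    ring
  rw [← one_div, le_div_iff₀ hT, ← hprod]
  gcongr

/-- The branch of `√(e^{iθ} t^α - e^{iφ})` starting at `-i e^{iφ/2}` is close to
`-e^{iθ/2} t^{α/2}` when `0 < θ - φ < π`. -/
lemma norm_branch_add_le {α θ φ : ℝ} (hpos : 0 < θ - φ) (hlt : θ - φ < Real.pi)
    {g : ℝ → ℂ} (hgcont : ContinuousOn g (Ici 0))
    (hgsq : ∀ t : ℝ, 0 ≤ t →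
      g t ^ 2 = Complex.exp (Complex.I * (θ : ℂ)) * ((t ^ α : ℝ) : ℂ)
        - Complex.exp (Complex.I * (φ : ℂ)))
    (hg0 : g 0 = -Complex.I * Complex.exp (Complex.I * ((φ / 2 : ℝ) : ℂ)))
    {t : ℝ} (ht : 0 < t) :
    ‖g t + Complex.exp (((θ / 2 : ℝ) : ℂ) * Complex.I) * ((t ^ (α / 2) : ℝ) : ℂ)‖
      ≤ t ^ (-(α / 2)) := by
  set e : ℂ := Complex.exp (((-(θ / 2) : ℝ) : ℂ) * Complex.I) with he
  set h : ℝ → ℂ := fun s => e * g s with hh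
  have hsq : ∀ s, 0 ≤ s →
      h s ^ 2 = ((s ^ α : ℝ) : ℂ) - Complex.exp (((φ - θ : ℝ) : ℂ) * Complex.I) := by
    intro s hs
    have e1 : e ^ 2 * Complex.exp (Complex.I * (θ : ℂ)) = 1 := by
      rw [he, ← Complex.exp_nat_mul, ← Complex.exp_add, ← Complex.exp_zero]
      congr 1
      push_cast
      ring
    have e2 : e ^ 2 * Complex.exp (Complex.I * (φ : ℂ))
        = Complex.exp (((φ - θ : ℝ) : ℂ) * Complex.I) := by
      rw [he, ← Complex.exp_nat_mul, ← Complex.exp_add]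
      congr 1
      push_cast
      ring
    rw [hh, mul_pow, hgsq s hs, mul_sub, e2, ← mul_assoc, e1, one_mul]
  have hre : (h t).re < 0 := by
    refine re_neg_of_sq_im_ne_zero (hgcont.const_smul e) (fun s hs => ?_) ?_ ht.le
    · have hsin : 0 < Real.sin (θ - φ) := Real.sin_pos_of_pos_of_lt_pi hpos hlt
      rw [show (e • g) s = h s from rfl, hsq s hs, Complex.sub_im, Complex.ofReal_im,
        Complex.exp_ofReal_mul_I_im, ← neg_sub θ φ, Real.sin_neg]
      linarith
    · have h0 : h 0 = -Complex.I * Complex.exp (((-((θ - φ) / 2) : ℝ) : ℂ) * Complex.I) := by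
        rw [hh]
        simp only
        rw [hg0, mul_left_comm, he, ← Complex.exp_add]
        congr 2
        push_cast
        ring
      have hsin : 0 < Real.sin ((θ - φ) / 2) :=
        Real.sin_pos_of_pos_of_lt_pi (by linarith) (by linarith)
      change (h 0).re < 0
      rw [h0, neg_mul, Complex.neg_re, Complex.I_mul_re, Complex.exp_ofReal_mul_I_im,
        Real.sin_neg]
      linarith
  have hT : 0 < t ^ (α / 2) := Real.rpow_pos_of_pos ht _
  have hu : ‖h t ^ 2 - ((t ^ (α / 2) : ℝ) : ℂ) ^ 2‖ = 1 := by
    rw [hsq t ht.le, ← Complex.ofReal_pow, ← Real.rpow_mul_natCast ht.le]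
    rw [show α / 2 * ((2 : ℕ) : ℝ) = α by push_cast; ring, sub_sub_cancel_left, norm_neg,
      Complex.norm_exp_ofReal_mul_I]
  have hmain := norm_add_le_inv_of_sq_sub_sq hT hre.le hu
  rw [Real.rpow_neg ht.le]
  refine le_of_eq_of_le ?_ hmain
  have hinv : e * Complex.exp (((θ / 2 : ℝ) : ℂ) * Complex.I) = 1 := by
    rw [he, ← Complex.exp_add, ← Complex.exp_zero]
    congr 1
    push_cast
    ring
  have hfac : h t + ((t ^ (α / 2) : ℝ) : ℂ)
      = e * (g t + Complex.exp (((θ / 2 : ℝ) : ℂ) * Complex.I) * ((t ^ (α / 2) : ℝ) : ℂ)) := by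
    rw [mul_add, ← mul_assoc, hinv, one_mul]
  rw [hfac, norm_mul, he, Complex.norm_exp_ofReal_mul_I, one_mul]

/-- Integrating `‖g + c s^{α/2}‖ ≤ s^{-α/2}` over `(0, t]`. -/
lemma norm_integral_add_le {α : ℝ} (hα0 : 0 < α) (hα2 : α < 2) {g : ℝ → ℂ}
    (hgcont : ContinuousOn g (Ici 0)) {c : ℂ}
    (hg : ∀ s, 0 < s → ‖g s + c * ((s ^ (α / 2) : ℝ) : ℂ)‖ ≤ s ^ (-(α / 2)))
    {t : ℝ} (ht : 0 < t) :
    ‖(∫ s in (0 : ℝ)..t, g s) + c * ((t ^ (1 + α / 2) / (1 + α / 2) : ℝ) : ℂ)‖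
      ≤ t ^ (1 - α / 2) / (1 - α / 2) := by
  have hgi : IntervalIntegrable g volume 0 t :=
    (hgcont.mono (by rw [uIcc_of_le ht.le]; exact Icc_subset_Ici_self)).intervalIntegrable
  have hpi : IntervalIntegrable (fun s : ℝ => s ^ (α / 2)) volume 0 t :=
    intervalIntegral.intervalIntegrable_rpow' (by linarith)
  have hci : IntervalIntegrable (fun s : ℝ => c * ((s ^ (α / 2) : ℝ) : ℂ)) volume 0 t :=
    IntervalIntegrable.const_mul ⟨hpi.1.ofReal, hpi.2.ofReal⟩ c
  have hint : (∫ s in (0 : ℝ)..t, c * ((s ^ (α / 2) : ℝ) : ℂ))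
      = c * ((t ^ (1 + α / 2) / (1 + α / 2) : ℝ) : ℂ) := by
    rw [intervalIntegral.integral_const_mul, intervalIntegral.integral_ofReal,
      integral_rpow (Or.inl (by linarith)), Real.zero_rpow (by linarith), sub_zero,
      add_comm (α / 2)]
  have hbound : (∫ s in (0 : ℝ)..t, s ^ (-(α / 2))) = t ^ (1 - α / 2) / (1 - α / 2) := by
    rw [integral_rpow (Or.inl (by linarith)), Real.zero_rpow (by linarith), sub_zero,
      neg_add_eq_sub]
  rw [← hint, ← intervalIntegral.integral_add hgi hci, ← hbound]
  exact intervalIntegral.norm_integral_le_of_norm_le ht.le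
    (ae_of_all _ fun s hs => hg s hs.1)
    (intervalIntegral.intervalIntegrable_rpow' (by linarith))

/-- with `c = e^{iθ}`, `μ = e^{iφ}`, `g` the continuous branch of
`√(c t^α − μ)` on `[0,∞)` with `g(0) = −i e^{iφ/2}` and `S(t) = ∫₀^t g`:
`Re S(t)/t^{1+α/2} → −2 cos(θ/2)/(α+2)` as `t → +∞`, and `Re S(t) → −∞`. -/
theorem stmt10 (α θ δ φ : ℝ) (hα0 : 0 < α) (hα2 : α < 2)
    (hθ1 : t0 α ≤ θ) (hθ2 : θ < min Real.pi (Real.pi * α))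
    (hδ1 : 0 < δ) (hδ2 : δ < (Real.pi * min 1 α - θ) / 2)
    (hφ1 : t0 α - δ < φ) (hφ2 : φ < t0 α)
    (g : ℝ → ℂ) (hgcont : ContinuousOn g (Set.Ici 0))
    (hgsq : ∀ t : ℝ, 0 ≤ t →
      g t ^ 2 = Complex.exp (Complex.I * (θ : ℂ)) * ((t ^ α : ℝ) : ℂ)
        - Complex.exp (Complex.I * (φ : ℂ)))
    (hg0 : g 0 = -Complex.I * Complex.exp (Complex.I * ((φ / 2 : ℝ) : ℂ)))
    (S : ℝ → ℂ) (hS : ∀ t : ℝ, S t = ∫ s in (0 : ℝ)..t, g s) :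
    Tendsto (fun t : ℝ => (S t).re / t ^ (1 + α / 2)) atTop
      (nhds (-2 * Real.cos (θ / 2) / (α + 2))) ∧
    Tendsto (fun t : ℝ => (S t).re) atTop atBot := by
  have ht0 : 0 < t0 α := by unfold t0; positivity
  have hθpi : θ < Real.pi := hθ2.trans_le (min_le_left _ _)
  have hmin : Real.pi * min 1 α ≤ Real.pi :=
    mul_le_of_le_one_right Real.pi_pos.le (min_le_left _ _)
  have hbound : ∀ t : ℝ, 0 < t →
      ‖S t + Complex.exp (((θ / 2 : ℝ) : ℂ) * Complex.I)
        * ((t ^ (1 + α / 2) / (1 + α / 2) : ℝ) : ℂ)‖ ≤ t ^ (1 - α / 2) / (1 - α / 2) := by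
    intro t ht
    rw [hS]
    exact norm_integral_add_le hα0 hα2 hgcont
      (fun s hs => norm_branch_add_le (by linarith) (by linarith) hgcont hgsq hg0 hs) ht
  have hlim : Tendsto (fun t : ℝ => (S t).re / t ^ (1 + α / 2)) atTop
      (nhds (-2 * Real.cos (θ / 2) / (α + 2))) := by
    have hzero : Tendsto (fun t : ℝ => t ^ (-α) / (1 - α / 2)) atTop (nhds 0) := by
      simpa using (tendsto_rpow_neg_atTop hα0).div_const (1 - α / 2)
    rw [tendsto_iff_norm_sub_tendsto_zero]
    refine squeeze_zero' (Eventually.of_forall fun _ => norm_nonneg _) ?_ hzero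
    filter_upwards [eventually_gt_atTop 0] with t ht
    have hp : 0 < t ^ (1 + α / 2) := Real.rpow_pos_of_pos ht _
    have hre := (Complex.abs_re_le_norm _).trans (hbound t ht)
    rw [Complex.add_re, Complex.re_mul_ofReal, Complex.exp_ofReal_mul_I_re] at hre
    have hsplit : t ^ (1 - α / 2) = t ^ (-α) * t ^ (1 + α / 2) := by
      rw [← Real.rpow_add ht]
      congr 1
      ring
    have heq : (S t).re / t ^ (1 + α / 2) - -2 * Real.cos (θ / 2) / (α + 2)
        = ((S t).re + Real.cos (θ / 2) * (t ^ (1 + α / 2) / (1 + α / 2)))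
          / t ^ (1 + α / 2) := by
      generalize t ^ (1 + α / 2) = p at hp
      have : 0 < 1 + α / 2 := by positivity
      field_simp
      ring
    rw [heq, Real.norm_eq_abs, abs_div, abs_of_pos hp, div_le_iff₀ hp, div_mul_eq_mul_div,
      ← hsplit]
    exact hre
  refine ⟨hlim, ?_⟩
  have hcos : 0 < Real.cos (θ / 2) :=
    Real.cos_pos_of_mem_Ioo ⟨by linarith [Real.pi_pos], by linarith⟩
  have hneg : -2 * Real.cos (θ / 2) / (α + 2) < 0 :=
    div_neg_of_neg_of_pos (by linarith) (by linarith)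
  refine (hlim.neg_mul_atTop hneg (tendsto_rpow_atTop (y := 1 + α / 2) (by linarith))).congr' ?_
  filter_upwards [eventually_gt_atTop 0] with t ht
  exact div_mul_cancel₀ _ (Real.rpow_pos_of_pos ht _).ne'
end

section
/- Under the stated parameter constraints, for t ≥ 0 the value q(t) = c t^α − μ is a real number if and only if t = Z₀, and q(Z₀) < 0. -/
open MeasureTheory Set

/-- The parameter constraints force `0 < φ`. -/
lemma phi_pos {α θ δ φ : ℝ} (hα0 : 0 < α) (hα2 : α < 2) (hθ : t0 α ≤ θ)
    (hδ : δ < (Real.pi * min 1 α - θ) / 2) (hφ : t0 α - δ < φ) : 0 < φ := by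
  have hmin : Real.pi * min 1 α ≤ Real.pi * α :=
    mul_le_mul_of_nonneg_left (min_le_right _ _) Real.pi_pos.le
  have ht : Real.pi * α < 3 * t0 α := by
    have : 0 < Real.pi * α := mul_pos Real.pi_pos hα0
    rw [t0, ← mul_div_assoc, lt_div_iff₀ (by linarith)]
    nlinarith
  linarith

lemma im_exp_mul_sub_exp (θ φ r : ℝ) :
    (Complex.exp (Complex.I * (θ : ℂ)) * (r : ℂ) - Complex.exp (Complex.I * (φ : ℂ))).im =
      Real.sin θ * r - Real.sin φ := by
  simp only [mul_comm Complex.I, Complex.sub_im, Complex.im_mul_ofReal,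
    Complex.exp_ofReal_mul_I_im]

lemma re_exp_mul_sub_exp (θ φ r : ℝ) :
    (Complex.exp (Complex.I * (θ : ℂ)) * (r : ℂ) - Complex.exp (Complex.I * (φ : ℂ))).re =
      Real.cos θ * r - Real.cos φ := by
  simp only [mul_comm Complex.I, Complex.sub_re, Complex.re_mul_ofReal,
    Complex.exp_ofReal_mul_I_re]

/-- with `c = e^{iθ}`, `μ = e^{iφ}`, `q(t) = c t^α − μ` and
`Z₀ = (sin φ / sin θ)^{1/α}`: for `t ≥ 0` the value `q(t)` is real iff `t = Z₀`,
and `q(Z₀)` is a negative real number. -/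
theorem stmt12 (α θ δ φ : ℝ) (hα0 : 0 < α) (hα2 : α < 2)
    (hθ1 : t0 α ≤ θ) (hθ2 : θ < min Real.pi (Real.pi * α))
    (hδ1 : 0 < δ) (hδ2 : δ < (Real.pi * min 1 α - θ) / 2)
    (hφ1 : t0 α - δ < φ) (hφ2 : φ < t0 α)
    (q : ℝ → ℂ)
    (hq : ∀ t : ℝ, q t = Complex.exp (Complex.I * (θ : ℂ)) * ((t ^ α : ℝ) : ℂ)
      - Complex.exp (Complex.I * (φ : ℂ)))
    (Z₀ : ℝ) (hZ₀ : Z₀ = (Real.sin φ / Real.sin θ) ^ (1 / α)) :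
    (∀ t : ℝ, 0 ≤ t → ((q t).im = 0 ↔ t = Z₀)) ∧
    (q Z₀).im = 0 ∧ (q Z₀).re < 0 := by
  have hφ0 : 0 < φ := phi_pos hα0 hα2 hθ1 hδ2 hφ1
  have hφθ : φ < θ := hφ2.trans_le hθ1
  have hθπ : θ < Real.pi := hθ2.trans_le (min_le_left _ _)
  have hsθ : 0 < Real.sin θ := Real.sin_pos_of_pos_of_lt_pi (hφ0.trans hφθ) hθπ
  have hsφ : 0 < Real.sin φ := Real.sin_pos_of_pos_of_lt_pi hφ0 (hφθ.trans hθπ)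
  have hreal : ∀ t : ℝ, 0 ≤ t → ((q t).im = 0 ↔ t = Z₀) := by
    intro t ht
    rw [hq, im_exp_mul_sub_exp, sub_eq_zero, mul_comm, ← eq_div_iff hsθ.ne', hZ₀, one_div,
      Real.eq_rpow_inv ht (div_pos hsφ hsθ).le hα0.ne']
  have hZ0 : 0 ≤ Z₀ := hZ₀ ▸ Real.rpow_nonneg (div_pos hsφ hsθ).le _
  refine ⟨hreal, (hreal Z₀ hZ0).2 rfl, ?_⟩
  have hpow : Z₀ ^ α = Real.sin φ / Real.sin θ := by
    rw [hZ₀, one_div, Real.rpow_inv_rpow (div_pos hsφ hsθ).le hα0.ne']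
  have hsub : 0 < Real.sin (θ - φ) :=
    Real.sin_pos_of_pos_of_lt_pi (by linarith) (by linarith)
  rw [Real.sin_sub] at hsub
  rw [hq, re_exp_mul_sub_exp, hpow, ← mul_div_assoc, sub_neg, div_lt_iff₀ hsθ]
  linarith
end

section
/- Under the stated parameter constraints, for every a > 0 and every t ≥ 0, the value c·(a+it)^α − μ (principal branch power) is not a positive real number. -/
open MeasureTheory Set

/-- A point `ρ e^{iA}` with `φ < A < 2π`, `0 < φ < π`, does not lie on the open horizontal
ray to the right of `e^{iφ}`. -/
lemma polar_sub_exp_ne_pos {ρ A φ r : ℝ} (hρ : 0 < ρ) (hr : 0 < r) (hφ0 : 0 < φ)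
    (hφπ : φ < Real.pi) (hφA : φ < A) (hA : A < 2 * Real.pi)
    (hre : ρ * Real.cos A = r + Real.cos φ) (him : ρ * Real.sin A = Real.sin φ) : False := by
  have hsinφ : 0 < Real.sin φ := Real.sin_pos_of_pos_of_lt_pi hφ0 hφπ
  have hsinA : 0 < Real.sin A := pos_of_mul_pos_right (him ▸ hsinφ) hρ.le
  have hAπ : A < Real.pi := by
    by_contra! h
    have := Real.sin_nonneg_of_nonneg_of_le_pi (x := A - Real.pi) (by linarith) (by linarith)
    rw [Real.sin_sub_pi] at this
    linarith
  have hpos : 0 < ρ * Real.sin (A - φ) :=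
    mul_pos hρ (Real.sin_pos_of_pos_of_lt_pi (by linarith) (by linarith))
  have hneg : ρ * Real.sin (A - φ) = -(r * Real.sin φ) := by
    rw [Real.sin_sub]
    linear_combination Real.cos φ * him - Real.sin φ * hre
  linarith [mul_pos hr hsinφ]

lemma pi_mul_min_le_three_mul_t0 {α : ℝ} (hα0 : 0 < α) :
    Real.pi * min 1 α ≤ 3 * t0 α := by
  have hπ := Real.pi_pos
  have h : min 1 α * (α + 2) ≤ 6 * α := by
    rcases le_total 1 α with h | h
    · rw [min_eq_left h]; linarith
    · rw [min_eq_right h]; nlinarith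
  have h3 : 3 * t0 α = Real.pi * (6 * α) / (α + 2) := by unfold t0; ring
  rw [h3, le_div_iff₀ (by linarith), mul_assoc]
  exact mul_le_mul_of_nonneg_left h hπ.le

/-- with `c = e^{iθ}` and `μ = e^{iφ}`, for every `a > 0` and `t ≥ 0` the
value `c·(a+it)^α − μ` (principal branch complex power) is not a positive real number. -/
theorem stmt13 (α θ δ φ : ℝ) (hα0 : 0 < α) (hα2 : α < 2)
    (hθ1 : t0 α ≤ θ) (hθ2 : θ < min Real.pi (Real.pi * α))
    (hδ1 : 0 < δ) (hδ2 : δ < (Real.pi * min 1 α - θ) / 2)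
    (hφ1 : t0 α - δ < φ) (hφ2 : φ < t0 α) :
    ∀ a : ℝ, 0 < a → ∀ t : ℝ, 0 ≤ t → ∀ r : ℝ, 0 < r →
      Complex.exp (Complex.I * (θ : ℂ)) * (((a : ℂ) + Complex.I * (t : ℂ)) ^ ((α : ℂ)))
        - Complex.exp (Complex.I * (φ : ℂ)) ≠ (r : ℂ) := by
  intro a ha t ht r hr heq
  have hθπ : θ < Real.pi := hθ2.trans_le (min_le_left _ _)
  have hφ0 : 0 < φ := by linarith [pi_mul_min_le_three_mul_t0 hα0]
  set z : ℂ := (a : ℂ) + Complex.I * (t : ℂ) with hz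
  have hzre : z.re = a := by simp [hz]
  have hzim : z.im = t := by simp [hz]
  have hz0 : z ≠ 0 := fun h => by simp [h] at hzre; linarith
  have harg0 : 0 ≤ z.arg := Complex.arg_nonneg_iff.2 (hzim ▸ ht)
  have harg1 : z.arg ≤ Real.pi / 2 := Complex.arg_le_pi_div_two_iff.2 (Or.inl (hzre ▸ ha.le))
  have hpolar : Complex.exp (Complex.I * (θ : ℂ)) * z ^ (α : ℂ) =
      Complex.exp (((Real.log ‖z‖ * α : ℝ) : ℂ) + ((θ + α * z.arg : ℝ) : ℂ) * Complex.I) := by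
    rw [Complex.cpow_def_of_ne_zero hz0, ← Complex.exp_add, Complex.log]
    push_cast
    ring_nf
  rw [hpolar, sub_eq_iff_eq_add, mul_comm Complex.I] at heq
  have hre := congrArg Complex.re heq
  have him := congrArg Complex.im heq
  simp only [Complex.exp_re, Complex.exp_im, Complex.add_re, Complex.add_im, Complex.ofReal_re,
    Complex.ofReal_im, Complex.re_ofReal_mul, Complex.im_ofReal_mul, Complex.I_re, Complex.I_im,
    mul_zero, mul_one, add_zero, zero_add, Real.exp_zero, one_mul] at hre him
  have hαarg : 0 ≤ α * z.arg := mul_nonneg hα0.le harg0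
  refine polar_sub_exp_ne_pos (Real.exp_pos _) hr hφ0 (by linarith) (by linarith) ?_ hre him
  nlinarith [Real.pi_pos]
end
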